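/- arXiv:math/0703883 — 2 statements merged into one kernel-verified Lean document; each statement's English description precedes it below -/
import Mathlib

section
/- Let 0 < α < 1. There exists a constant C > 0 such that for every Schwartz vector field u : ℝ³ → ℝ³ with div u = 0 and vorticity ω = curl u, |∫_{ℝ³} ((ω·∇)u) · ω dx| ≤ C (‖∇ω‖_{L²}^{1+α} ‖ω‖_{L²}^{1−α} ‖ω‖_{Ḃ^{−1−α}_{∞,∞}} + ‖∇ω‖_{L²}^{α} ‖ω‖_{L²}^{2−α} ‖ω‖_{Ḃ^{−α}_{∞,∞}}), the inequality holding in [0,∞]. -/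
open MeasureTheory Real Complex Filter Function
open scoped ENNReal FourierTransform SchwartzMap

noncomputable section

/-- The properties of the radial smooth cutoff `χ` used to build the
Littlewood–Paley decomposition: smooth, compactly supported, radial,
`0 ≤ χ ≤ 1`, `χ = 1` on `{‖ξ‖ ≤ 3/4}` and `χ = 0` on `{‖ξ‖ > 4/3}`. -/
def IsLPCutoff {n : ℕ} (χ : EuclideanSpace ℝ (Fin n) → ℝ) : Prop :=
  ContDiff ℝ ((⊤ : ℕ∞) : WithTop ℕ∞) χ ∧ HasCompactSupport χ ∧
    (∀ ξ η, ‖ξ‖ = ‖η‖ → χ ξ = χ η) ∧ (∀ ξ, 0 ≤ χ ξ) ∧ (∀ ξ, χ ξ ≤ 1) ∧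
    (∀ ξ, ‖ξ‖ ≤ 3 / 4 → χ ξ = 1) ∧ (∀ ξ, 4 / 3 < ‖ξ‖ → χ ξ = 0)

/-- The low-frequency Littlewood–Paley projection `S_j f = 𝓕⁻¹(χ(·/2^j) 𝓕 f)`. -/
def Sproj {n : ℕ} (χ : EuclideanSpace ℝ (Fin n) → ℝ) (j : ℤ)
    (f : EuclideanSpace ℝ (Fin n) → ℂ) : EuclideanSpace ℝ (Fin n) → ℂ :=
  𝓕⁻ fun ξ => ((χ ((2 : ℝ) ^ (-j) • ξ) : ℝ) : ℂ) * 𝓕 f ξ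

/-- The Littlewood–Paley block `Δ_j f = 𝓕⁻¹(φ̂(·/2^j) 𝓕 f)`, where
`φ̂(ξ) = χ(ξ/2) - χ(ξ)`, i.e. `φ̂(ξ/2^j) = χ(ξ/2^(j+1)) - χ(ξ/2^j)`. -/
def Dproj {n : ℕ} (χ : EuclideanSpace ℝ (Fin n) → ℝ) (j : ℤ)
    (f : EuclideanSpace ℝ (Fin n) → ℂ) : EuclideanSpace ℝ (Fin n) → ℂ :=
  𝓕⁻ fun ξ => ((χ ((2 : ℝ) ^ (-(j + 1)) • ξ) - χ ((2 : ℝ) ^ (-j) • ξ) : ℝ) : ℂ) * 𝓕 f ξ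

/-- The `ℓ^q(ℤ)` norm of a sequence of extended nonnegative reals, with the usual
supremum modification for `q = ∞`. -/
def lqNorm (q : ℝ≥0∞) (a : ℤ → ℝ≥0∞) : ℝ≥0∞ :=
  if q = ∞ then ⨆ j, a j else (∑' j, a j ^ q.toReal) ^ (1 / q.toReal)

/-- The homogeneous Besov norm `‖f‖_{Ḃ^s_{p,q}}`, valued in `[0,∞]`. -/
def besovNorm {n : ℕ} (χ : EuclideanSpace ℝ (Fin n) → ℝ) (s : ℝ) (p q : ℝ≥0∞)
    (f : EuclideanSpace ℝ (Fin n) → ℂ) : ℝ≥0∞ :=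
  lqNorm q fun j => (2 : ℝ≥0∞) ^ ((j : ℝ) * s) * eLpNorm (Dproj χ j f) p volume
noncomputable section

/-- Abbreviation for the Euclidean space `ℝ³`. -/
abbrev E3 := EuclideanSpace ℝ (Fin 3)

/-- The partial derivative `∂ᵢ f` in the `i`-th coordinate direction. -/
def pd (i : Fin 3) (f : E3 → ℝ) : E3 → ℝ :=
  fun x => fderiv ℝ f x (EuclideanSpace.single i 1)

/-- The curl `∇ × u = (∂₂u³ - ∂₃u², ∂₃u¹ - ∂₁u³, ∂₁u² - ∂₂u¹)` of a vector field on `ℝ³`. -/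
def curl3 (u : Fin 3 → E3 → ℝ) : Fin 3 → E3 → ℝ :=
  ![fun x => pd 1 (u 2) x - pd 2 (u 1) x,
    fun x => pd 2 (u 0) x - pd 0 (u 2) x,
    fun x => pd 0 (u 1) x - pd 1 (u 0) x]

/-- The curl of a Schwartz vector field on `ℝ³`. -/
def curlS (u : Fin 3 → 𝓢(E3, ℝ)) : Fin 3 → E3 → ℝ :=
  curl3 fun i => ⇑(u i)

/-- The `L²` norm of a vector field (the `ℓ²` combination of the componentwise norms),
valued in `[0,∞]`. -/
def vecL2 (v : Fin 3 → E3 → ℝ) : ℝ≥0∞ :=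
  (∑ i : Fin 3, eLpNorm (v i) 2 volume ^ (2 : ℝ)) ^ (1 / 2 : ℝ)

/-- The `L²` norm `‖∇v‖_{L²}` of the gradient of a vector field,
`‖∇v‖_{L²}² = Σ_{i,j} ‖∂ᵢ vʲ‖_{L²}²`, valued in `[0,∞]`. -/
def gradL2 (v : Fin 3 → E3 → ℝ) : ℝ≥0∞ :=
  (∑ i : Fin 3, ∑ j : Fin 3, eLpNorm (pd i (v j)) 2 volume ^ (2 : ℝ)) ^ (1 / 2 : ℝ)

/-- The homogeneous Besov norm `‖v‖_{Ḃ^s_{∞,∞}} = sup_j 2^{js} ‖Δ_j v‖_{L^∞}` of a real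
vector field on `ℝ³`, taken as the maximum (supremum) over the components. -/
def vecBesovInf (χ : E3 → ℝ) (s : ℝ) (v : Fin 3 → E3 → ℝ) : ℝ≥0∞ :=
  ⨆ i : Fin 3, ⨆ j : ℤ,
    (2 : ℝ≥0∞) ^ ((j : ℝ) * s) * eLpNorm (Dproj χ j fun x => ((v i x : ℝ) : ℂ)) ⊤ volume

/-- The homogeneous Besov norm `Ḃ^s_{2,2}` of a 3×3-matrix field, as the `ℓ²`
combination of the componentwise Besov norms. -/
def matBesov22 (χ : E3 → ℝ) (s : ℝ) (m : Fin 3 → Fin 3 → E3 → ℝ) : ℝ≥0∞ :=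
  (∑ i : Fin 3, ∑ j : Fin 3,
      besovNorm χ s 2 2 (fun x => ((m i j x : ℝ) : ℂ)) ^ (2 : ℝ)) ^ (1 / 2 : ℝ)

/-- The `L²` norm of `Λ^α v`, where `Λ^α f = 𝓕⁻¹(|ξ|^α 𝓕 f)` acts componentwise on the
real vector field `v`, taken as the `ℓ²` combination of the componentwise norms. -/
def vecFracLapL2 (α : ℝ) (v : Fin 3 → E3 → ℝ) : ℝ≥0∞ :=
  (∑ i : Fin 3,
      eLpNorm (𝓕⁻ fun ξ => ((‖ξ‖ ^ α : ℝ) : ℂ) * 𝓕 (fun x => ((v i x : ℝ) : ℂ)) ξ) 2 volume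
        ^ (2 : ℝ)) ^ (1 / 2 : ℝ)

/-- The vortex-stretching integral `∫ ((ω·∇)u)·ω dx` of a Schwartz vector field `u`
with vorticity `ω = curl u`. -/
def vortexStretch (u : Fin 3 → 𝓢(E3, ℝ)) : ℝ :=
  ∫ x, ∑ j : Fin 3, (∑ i : Fin 3, curlS u i x * pd i (⇑(u j)) x) * curlS u j x

/-!
The second term on the right suffices, even for `α ≤ 2`; it rests on the refined Sobolev inequality
`‖f‖_{L³}³ ≲ ‖f‖_{Ḃ^{-α}_{∞,∞}} ‖f‖²_{Ḣ^{α/2}}`. To prove the latter, cut `f` at the frequency,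
depending on `|f(x)|`, below which the Besov norm allows at most half of `|f(x)|`; the remaining
high frequencies then carry the other half, and are summed over dyadic levels in `L²`.

For a divergence-free `u` the components of `∇u` are sums of double Riesz transforms of those of the
vorticity `ω` (Biot–Savart). Their symbols are homogeneous of degree zero, so on each
Littlewood–Paley block they act on `L^∞` as one rescaled integrable kernel, and on `Ḣ^{α/2}` they
are contractions. Hence both `ω` and `∇u` obey the `L³` bound in terms of `ω` alone; Hölder's
inequality, together with the interpolation of `Ḣ^{α/2}` between `L²` and `Ḣ¹`, gives the estimate.
-/

section Lebesgue

variable {X : Type*} [MeasurableSpace X] {μ : Measure X}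

theorem enorm_le_eLpNorm_top [TopologicalSpace X] [μ.IsOpenPosMeasure] {E : Type*}
    [SeminormedAddCommGroup E] {f : X → E} (hf : Continuous f) (x : X) :
    ‖f x‖ₑ ≤ eLpNorm f ⊤ μ := by
  have hclosed : IsClosed {x | ‖f x‖ₑ ≤ eLpNorm f ⊤ μ} := isClosed_le hf.enorm continuous_const
  have hae : ∀ᵐ x ∂μ, ‖f x‖ₑ ≤ eLpNorm f ⊤ μ := by
    simpa only [eLpNorm_exponent_top] using ae_le_eLpNormEssSup
  exact hclosed.closure_subset (Measure.dense_of_ae hae x)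

theorem eLpNorm_top_le_of_enorm_le {E : Type*} [SeminormedAddCommGroup E] {f : X → E} {c : ℝ≥0∞}
    (hf : ∀ x, ‖f x‖ₑ ≤ c) : eLpNorm f ⊤ μ ≤ c := by
  rw [eLpNorm_exponent_top]
  exact essSup_le_of_ae_le c (Eventually.of_forall hf)

theorem eLpNorm_two_sq {E : Type*} [NormedAddCommGroup E] (f : X → E) :
    eLpNorm f 2 μ ^ (2 : ℝ) = ∫⁻ x, ‖f x‖ₑ ^ 2 ∂μ := by
  simpa using eLpNorm_nnreal_pow_eq_lintegral (μ := μ) (f := f) (two_ne_zero (α := NNReal))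

theorem lintegral_prod_le_of_forall_lintegral_pow_card_le {ι : Type*} {s : Finset ι}
    (hs : s.Nonempty) {f : ι → X → ℝ≥0∞} (hf : ∀ i ∈ s, AEMeasurable (f i) μ) {Q : ℝ≥0∞}
    (hQ : ∀ i ∈ s, ∫⁻ x, f i x ^ s.card ∂μ ≤ Q) :
    ∫⁻ x, ∏ i ∈ s, f i x ∂μ ≤ Q := by
  have hcard : (s.card : ℝ) ≠ 0 := by simpa using hs.ne_empty
  have hroot (a : ℝ≥0∞) : (a ^ s.card) ^ (s.card : ℝ)⁻¹ = a := by
    rw [← ENNReal.rpow_natCast_mul, mul_inv_cancel₀ hcard, ENNReal.rpow_one]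
  calc ∫⁻ x, ∏ i ∈ s, f i x ∂μ
      = ∫⁻ x, ∏ i ∈ s, (f i x ^ s.card) ^ (s.card : ℝ)⁻¹ ∂μ := by simp only [hroot]
    _ ≤ ∏ i ∈ s, (∫⁻ x, f i x ^ s.card ∂μ) ^ (s.card : ℝ)⁻¹ :=
        ENNReal.lintegral_prod_norm_pow_le s (fun i hi => (hf i hi).pow_const _)
          (by simp [hcard]) fun _ _ => by positivity
    _ ≤ ∏ _i ∈ s, Q ^ (s.card : ℝ)⁻¹ :=
        Finset.prod_le_prod' fun i hi => ENNReal.rpow_le_rpow (hQ i hi) (by positivity)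
    _ = Q := by
        rw [Finset.prod_const, ← ENNReal.rpow_mul_natCast, inv_mul_cancel₀ hcard, ENNReal.rpow_one]

end Lebesgue

theorem enorm_sum_sq_le_card_mul_sum {ι E : Type*} [NormedAddCommGroup E] (s : Finset ι)
    (f : ι → E) : ‖∑ i ∈ s, f i‖ₑ ^ 2 ≤ s.card * ∑ i ∈ s, ‖f i‖ₑ ^ 2 := by
  refine (pow_le_pow_left' (enorm_sum_le s f) 2).trans ?_
  have h := ENNReal.rpow_sum_le_const_mul_sum_rpow s (fun i => ‖f i‖ₑ) one_le_two
  norm_num at h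
  exact h

section FourierMultiplier

variable {V : Type*} [NormedAddCommGroup V] [InnerProductSpace ℝ V] [FiniteDimensional ℝ V]
  [MeasurableSpace V] [BorelSpace V]

theorem lintegral_enorm_fourier_sq (f : 𝓢(V, ℂ)) :
    ∫⁻ ξ, ‖𝓕 f ξ‖ₑ ^ 2 = ∫⁻ x, ‖f x‖ₑ ^ 2 := by
  have key (g : 𝓢(V, ℂ)) : ∫⁻ x, ‖g x‖ₑ ^ 2 = ENNReal.ofReal (∫ x, ‖g x‖ ^ 2) := by
    have hg : Integrable fun x => ‖g x‖ ^ 2 :=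
      MemLp.integrable_norm_pow (p := 2) (by simpa using g.memLp 2) two_ne_zero
    rw [ofReal_integral_eq_lintegral_ofReal hg (Eventually.of_forall fun x => by positivity)]
    simp only [ENNReal.ofReal_pow (norm_nonneg _), ofReal_norm]
  rw [key, key, SchwartzMap.integral_norm_sq_fourier]

theorem fourier_fourierMultiplierCLM_apply {m : V → ℂ} (hm : m.HasTemperateGrowth)
    (f : 𝓢(V, ℂ)) (ξ : V) :
    𝓕 (SchwartzMap.fourierMultiplierCLM ℂ m f) ξ = m ξ * 𝓕 f ξ := by
  rw [SchwartzMap.fourierMultiplierCLM_apply, FourierTransform.fourier_fourierInv_eq,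
    SchwartzMap.smulLeftCLM_apply_apply hm, smul_eq_mul]

theorem coe_fourierMultiplierCLM {m : V → ℂ} (hm : m.HasTemperateGrowth) (f : 𝓢(V, ℂ)) :
    ⇑(SchwartzMap.fourierMultiplierCLM ℂ m f) = 𝓕⁻ fun ξ => m ξ * 𝓕 f ξ := by
  rw [SchwartzMap.fourierMultiplierCLM_apply, SchwartzMap.fourierInv_coe]
  congr 1
  funext ξ
  rw [SchwartzMap.smulLeftCLM_apply_apply hm, smul_eq_mul]

theorem schwartz_ext_fourier {f g : 𝓢(V, ℂ)} (h : ∀ ξ, 𝓕 f ξ = 𝓕 g ξ) : f = g :=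
  (FourierTransform.fourierEquiv ℂ 𝓢(V, ℂ)).injective (SchwartzMap.ext h)

theorem schwartz_fourier_sub (f g : 𝓢(V, ℂ)) : 𝓕 (f - g) = 𝓕 f - 𝓕 g :=
  map_sub (FourierTransform.fourierCLM ℂ 𝓢(V, ℂ)) f g

theorem fourierInv_dilated_fourier_mul {k G : V → ℂ} (hk : Integrable k) (hG : Integrable G)
    (t : ℝ) (x : V) :
    𝓕⁻ (fun ξ => 𝓕 k (t • ξ) * G ξ) x = ∫ y, k y * 𝓕⁻ G (x - t • y) := by
  have hphase (ξ y : V) : inner ℝ ξ (x - t • y) = -inner ℝ y (t • ξ) + inner ℝ ξ x := by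
    rw [inner_sub_right, inner_smul_right, inner_smul_right, real_inner_comm y ξ]
    ring
  have hprod : Integrable (Function.uncurry fun ξ y : V =>
      (Real.fourierChar (inner ℝ ξ (x - t • y)) : ℂ) * (G ξ * k y)) (volume.prod volume) := by
    refine (hG.mul_prod hk).bdd_mul (c := 1)
      (Continuous.aestronglyMeasurable (by fun_prop))
      (Eventually.of_forall fun z => (Circle.norm_coe _).le)
  calc 𝓕⁻ (fun ξ => 𝓕 k (t • ξ) * G ξ) x
      = ∫ ξ, ∫ y, (Real.fourierChar (inner ℝ ξ (x - t • y)) : ℂ) * (G ξ * k y) := by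
        simp only [Real.fourierInv_eq, Real.fourier_eq, Circle.smul_def, smul_eq_mul, hphase,
          AddChar.map_add_eq_mul, Circle.coe_mul, ← integral_mul_const, ← integral_const_mul]
        congr! 4
        ring
    _ = ∫ y, ∫ ξ, (Real.fourierChar (inner ℝ ξ (x - t • y)) : ℂ) * (G ξ * k y) :=
        integral_integral_swap hprod
    _ = ∫ y, k y * 𝓕⁻ G (x - t • y) := by
        simp only [Real.fourierInv_eq, Circle.smul_def, smul_eq_mul, ← integral_const_mul]
        congr! 4
        ring

theorem eLpNorm_top_fourierMultiplierCLM_dilate_le (a f : 𝓢(V, ℂ)) (t : ℝ) :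
    eLpNorm (SchwartzMap.fourierMultiplierCLM ℂ (fun ξ => a (t • ξ)) f) ⊤ volume ≤
      eLpNorm (𝓕⁻ a : 𝓢(V, ℂ)) 1 volume * eLpNorm f ⊤ volume := by
  have ha : (fun ξ : V => a (t • ξ)).HasTemperateGrowth :=
    a.hasTemperateGrowth.comp (t • ContinuousLinearMap.id ℝ V).hasTemperateGrowth
  have hkernel (x : V) : SchwartzMap.fourierMultiplierCLM ℂ (fun ξ => a (t • ξ)) f x =
      ∫ y, (𝓕⁻ a : 𝓢(V, ℂ)) y * f (x - t • y) := by
    have h := fourierInv_dilated_fourier_mul (𝓕⁻ a : 𝓢(V, ℂ)).integrable (𝓕 f).integrable t x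
    rw [← SchwartzMap.fourier_coe, ← SchwartzMap.fourierInv_coe,
      FourierTransform.fourier_fourierInv_eq, FourierTransform.fourierInv_fourier_eq] at h
    rw [coe_fourierMultiplierCLM ha, ← h, SchwartzMap.fourier_coe]
  refine eLpNorm_top_le_of_enorm_le fun x => ?_
  calc _ = ‖∫ y, (𝓕⁻ a : 𝓢(V, ℂ)) y * f (x - t • y)‖ₑ := by rw [hkernel]
    _ ≤ ∫⁻ y, ‖(𝓕⁻ a : 𝓢(V, ℂ)) y * f (x - t • y)‖ₑ := enorm_integral_le_lintegral_enorm _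
    _ ≤ ∫⁻ y, ‖(𝓕⁻ a : 𝓢(V, ℂ)) y‖ₑ * eLpNorm f ⊤ volume := by
        gcongr with y
        rw [enorm_mul]
        gcongr
        exact enorm_le_eLpNorm_top f.continuous _
    _ = _ := by
        rw [lintegral_mul_const _ (by fun_prop), eLpNorm_one_eq_lintegral_enorm]

end FourierMultiplier

/-- The geometric series `∑_{k ≥ 0} 2^{-kα}`, the constant lost when summing dyadic scales. -/
def dyadicSum (α : ℝ) : ℝ≥0∞ := ∑' k : ℕ, (2 : ℝ≥0∞) ^ (-(k : ℝ) * α)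

theorem two_rpow_add (s t : ℝ) : (2 : ℝ≥0∞) ^ (s + t) = 2 ^ s * 2 ^ t :=
  ENNReal.rpow_add s t two_ne_zero ENNReal.ofNat_ne_top

theorem two_rpow_ne_top (s : ℝ) : (2 : ℝ≥0∞) ^ s ≠ ∞ :=
  ENNReal.rpow_ne_top_of_ne_zero two_ne_zero ENNReal.ofNat_ne_top

theorem two_rpow_ne_zero (s : ℝ) : (2 : ℝ≥0∞) ^ s ≠ 0 := by
  simp [ENNReal.rpow_eq_zero_iff]

theorem one_lt_two_rpow {α : ℝ} (hα : 0 < α) : 1 < (2 : ℝ≥0∞) ^ α :=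
  ENNReal.one_lt_rpow (by norm_num) hα

theorem dyadicSum_ne_top {α : ℝ} (hα : 0 < α) : dyadicSum α ≠ ∞ := by
  have hpow (k : ℕ) : (2 : ℝ≥0∞) ^ (-(k : ℝ) * α) = ((2 ^ α)⁻¹) ^ k := by
    rw [neg_mul, ENNReal.rpow_neg, mul_comm, ENNReal.rpow_mul_natCast, ENNReal.inv_pow]
  simp only [dyadicSum, hpow]
  rw [ENNReal.tsum_geometric]
  refine ENNReal.inv_ne_top.2 (tsub_pos_of_lt ?_).ne'
  exact ENNReal.inv_lt_one.2 (one_lt_two_rpow hα)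

theorem dyadicSum_ne_zero (α : ℝ) : dyadicSum α ≠ 0 := fun h =>
  two_rpow_ne_zero _ (ENNReal.tsum_eq_zero.1 h 0)

theorem tsum_two_rpow_sub_natCast (α M : ℝ) :
    ∑' k : ℕ, (2 : ℝ≥0∞) ^ ((M - k) * α) = dyadicSum α * 2 ^ (M * α) := by
  rw [dyadicSum, ← ENNReal.tsum_mul_right]
  refine tsum_congr fun k => ?_
  rw [← two_rpow_add]
  ring_nf

theorem tsum_two_rpow_of_zpow_le {α : ℝ} (hα : 0 < α) (t : ℝ≥0∞) :
    ∑' N : ℤ, (if (2 : ℝ≥0∞) ^ N ≤ t then (2 : ℝ≥0∞) ^ ((N : ℝ) * α) else 0) ≤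
      dyadicSum α * t ^ α := by
  rcases eq_or_ne t 0 with rfl | ht0
  · have hfalse (N : ℤ) : ¬ (2 : ℝ≥0∞) ^ N ≤ 0 :=
      not_le.2 (ENNReal.zpow_pos two_ne_zero ENNReal.ofNat_ne_top N)
    simp [hfalse]
  rcases eq_or_ne t ∞ with rfl | ht
  · simp [ENNReal.top_rpow_of_pos hα, ENNReal.mul_top (dyadicSum_ne_zero α)]
  obtain ⟨M, hM, hM'⟩ := ENNReal.exists_mem_Ico_zpow ht0 ht ENNReal.one_lt_two ENNReal.ofNat_ne_top
  have hinj : Injective fun k : ℕ => M - (k : ℤ) := fun a b hab => by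
    simpa using hab
  have hsupp : support (fun N : ℤ => if (2 : ℝ≥0∞) ^ N ≤ t then (2 : ℝ≥0∞) ^ ((N : ℝ) * α) else 0)
      ⊆ Set.range fun k : ℕ => M - (k : ℤ) := by
    intro N hN
    have hNt : (2 : ℝ≥0∞) ^ N ≤ t := by
      by_contra h
      simp [h] at hN
    have hNM : N < M + 1 := by
      by_contra! h
      exact (hNt.trans_lt hM').not_ge (ENNReal.zpow_le_of_le one_le_two h)
    exact ⟨(M - N).toNat, by simp only; omega⟩
  calc _ = ∑' k : ℕ, (if (2 : ℝ≥0∞) ^ (M - (k : ℤ)) ≤ t then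
        (2 : ℝ≥0∞) ^ (((M - (k : ℤ) : ℤ) : ℝ) * α) else 0) := (hinj.tsum_eq hsupp).symm
    _ ≤ ∑' k : ℕ, (2 : ℝ≥0∞) ^ (((M : ℝ) - k) * α) := by
        refine ENNReal.tsum_le_tsum fun k => ?_
        split_ifs <;> simp
    _ = dyadicSum α * ((2 : ℝ≥0∞) ^ M) ^ α := by
        rw [tsum_two_rpow_sub_natCast, ← ENNReal.rpow_intCast_mul]
    _ ≤ dyadicSum α * t ^ α := by gcongr

theorem enorm_le_two_mul_enorm_sub {E : Type*} [NormedAddCommGroup E] {v w : E}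
    (hw : 2 * ‖w‖ₑ ≤ ‖v‖ₑ) : ‖v‖ₑ ≤ 2 * ‖v - w‖ₑ := by
  have htri : ‖v‖ₑ ≤ ‖v - w‖ₑ + ‖w‖ₑ := by simpa using enorm_add_le (v - w) w
  refine (ENNReal.add_le_add_iff_right (enorm_ne_top (x := v))).1 ?_
  calc ‖v‖ₑ + ‖v‖ₑ = 2 * ‖v‖ₑ := (two_mul _).symm
    _ ≤ 2 * (‖v - w‖ₑ + ‖w‖ₑ) := by gcongr
    _ = 2 * ‖v - w‖ₑ + 2 * ‖w‖ₑ := mul_add _ _ _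
    _ ≤ 2 * ‖v - w‖ₑ + ‖v‖ₑ := by gcongr

theorem enorm_cube_le_tsum {E : Type*} [NormedAddCommGroup E] {α : ℝ} (hα : 0 < α) {c : ℝ≥0∞}
    (hc0 : c ≠ 0) (hc : c ≠ ∞) (v : E) (s : ℤ → E)
    (hs : ∀ N : ℤ, ‖s N‖ₑ ≤ c * 2 ^ ((N : ℝ) * α)) :
    ‖v‖ₑ ^ 3 ≤ 8 * 2 ^ α * c * ∑' N : ℤ, 2 ^ ((N : ℝ) * α) * ‖v - s N‖ₑ ^ 2 := by
  rcases eq_or_ne ‖v‖ₑ 0 with hv | hv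
  · simp [hv]
  have h2c : 2 * c ≠ 0 := mul_ne_zero two_ne_zero hc0
  have h2c' : 2 * c ≠ ∞ := ENNReal.mul_ne_top ENNReal.ofNat_ne_top hc
  -- At the largest scale with `2c · 2^{Nα} ≤ ‖v‖`, `s N` is at most half of `v`.
  obtain ⟨N, hN, hN'⟩ := ENNReal.exists_mem_Ico_zpow (x := ‖v‖ₑ / (2 * c)) (y := 2 ^ α)
    (by simp [hv, h2c']) (ENNReal.div_ne_top enorm_ne_top h2c) (one_lt_two_rpow hα)
    (two_rpow_ne_top α)
  have hpow : ((2 : ℝ≥0∞) ^ α) ^ N = 2 ^ ((N : ℝ) * α) := by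
    rw [mul_comm, ENNReal.rpow_mul, ENNReal.rpow_intCast]
  have hpow' : ((2 : ℝ≥0∞) ^ α) ^ (N + 1) = 2 ^ ((N : ℝ) * α) * 2 ^ α := by
    rw [ENNReal.zpow_add (two_rpow_ne_zero α) (two_rpow_ne_top α), hpow, zpow_one]
  rw [hpow, ENNReal.le_div_iff_mul_le (.inl h2c) (.inl h2c')] at hN
  have hupper : ‖v‖ₑ ≤ 2 ^ ((N : ℝ) * α) * 2 ^ α * (2 * c) := by
    rw [← hpow', ← ENNReal.div_le_iff h2c h2c']
    exact hN'.le
  have hhalf : ‖v‖ₑ ≤ 2 * ‖v - s N‖ₑ :=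
    enorm_le_two_mul_enorm_sub ((mul_le_mul_right (hs N) 2).trans (le_of_eq_of_le (by ring) hN))
  calc ‖v‖ₑ ^ 3 = ‖v‖ₑ * ‖v‖ₑ ^ 2 := pow_succ' _ _
    _ ≤ 2 ^ ((N : ℝ) * α) * 2 ^ α * (2 * c) * (2 * ‖v - s N‖ₑ) ^ 2 := by gcongr
    _ = 8 * 2 ^ α * c * (2 ^ ((N : ℝ) * α) * ‖v - s N‖ₑ ^ 2) := by ring
    _ ≤ _ := by
        gcongr
        exact ENNReal.le_tsum N

section LittlewoodPaley

variable {n : ℕ} {χ : EuclideanSpace ℝ (Fin n) → ℝ}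

namespace IsLPCutoff

theorem contDiff (hχ : IsLPCutoff χ) : ContDiff ℝ ((⊤ : ℕ∞) : WithTop ℕ∞) χ := hχ.1

theorem nonneg (hχ : IsLPCutoff χ) (ξ : EuclideanSpace ℝ (Fin n)) : 0 ≤ χ ξ := hχ.2.2.2.1 ξ

theorem le_one (hχ : IsLPCutoff χ) (ξ : EuclideanSpace ℝ (Fin n)) : χ ξ ≤ 1 := hχ.2.2.2.2.1 ξ

theorem eq_one (hχ : IsLPCutoff χ) {ξ : EuclideanSpace ℝ (Fin n)} (h : ‖ξ‖ ≤ 3 / 4) : χ ξ = 1 :=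
  hχ.2.2.2.2.2.1 ξ h

theorem eq_zero (hχ : IsLPCutoff χ) {ξ : EuclideanSpace ℝ (Fin n)} (h : 4 / 3 < ‖ξ‖) : χ ξ = 0 :=
  hχ.2.2.2.2.2.2 ξ h

theorem smul_eq_one (hχ : IsLPCutoff χ) {t : ℝ} (ht : 0 ≤ t) {ξ : EuclideanSpace ℝ (Fin n)}
    (h : t * ‖ξ‖ ≤ 3 / 4) : χ (t • ξ) = 1 :=
  hχ.eq_one (by rwa [norm_smul_of_nonneg ht])

theorem smul_eq_zero (hχ : IsLPCutoff χ) {t : ℝ} (ht : 0 ≤ t) {ξ : EuclideanSpace ℝ (Fin n)}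
    (h : 4 / 3 < t * ‖ξ‖) : χ (t • ξ) = 0 :=
  hχ.eq_zero (by rwa [norm_smul_of_nonneg ht])

theorem hasTemperateGrowth_dilate (hχ : IsLPCutoff χ) (t : ℝ) :
    (fun ξ => ((χ (t • ξ) : ℝ) : ℂ)).HasTemperateGrowth :=
  Complex.hasTemperateGrowth_ofReal.comp <|
    (hχ.2.1.hasTemperateGrowth hχ.contDiff).comp
      (t • ContinuousLinearMap.id ℝ (EuclideanSpace ℝ (Fin n))).hasTemperateGrowth

end IsLPCutoff

/-- The low-frequency projection `Sproj χ j f` of a Schwartz function, as a Schwartz function. -/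
def schwartzSproj (χ : EuclideanSpace ℝ (Fin n) → ℝ) (j : ℤ)
    (f : 𝓢(EuclideanSpace ℝ (Fin n), ℂ)) : 𝓢(EuclideanSpace ℝ (Fin n), ℂ) :=
  SchwartzMap.fourierMultiplierCLM ℂ (fun ξ => ((χ ((2 : ℝ) ^ (-j) • ξ) : ℝ) : ℂ)) f

/-- The Littlewood–Paley block `Dproj χ j f` of a Schwartz function, as a Schwartz function. -/
def schwartzDproj (χ : EuclideanSpace ℝ (Fin n) → ℝ) (j : ℤ)
    (f : 𝓢(EuclideanSpace ℝ (Fin n), ℂ)) : 𝓢(EuclideanSpace ℝ (Fin n), ℂ) :=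
  schwartzSproj χ (j + 1) f - schwartzSproj χ j f

theorem fourier_schwartzSproj_apply (hχ : IsLPCutoff χ) (j : ℤ)
    (f : 𝓢(EuclideanSpace ℝ (Fin n), ℂ)) (ξ : EuclideanSpace ℝ (Fin n)) :
    𝓕 (schwartzSproj χ j f) ξ = ((χ ((2 : ℝ) ^ (-j) • ξ) : ℝ) : ℂ) * 𝓕 f ξ :=
  fourier_fourierMultiplierCLM_apply (hχ.hasTemperateGrowth_dilate _) f ξ

theorem fourier_schwartzDproj_apply (hχ : IsLPCutoff χ) (j : ℤ)
    (f : 𝓢(EuclideanSpace ℝ (Fin n), ℂ)) (ξ : EuclideanSpace ℝ (Fin n)) :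
    𝓕 (schwartzDproj χ j f) ξ =
      ((χ ((2 : ℝ) ^ (-(j + 1)) • ξ) - χ ((2 : ℝ) ^ (-j) • ξ) : ℝ) : ℂ) * 𝓕 f ξ := by
  rw [schwartzDproj, schwartz_fourier_sub, sub_apply, fourier_schwartzSproj_apply hχ,
    fourier_schwartzSproj_apply hχ, ← sub_mul, Complex.ofReal_sub]

theorem coe_schwartzSproj (hχ : IsLPCutoff χ) (j : ℤ) (f : 𝓢(EuclideanSpace ℝ (Fin n), ℂ)) :
    ⇑(schwartzSproj χ j f) = Sproj χ j f := by
  rw [schwartzSproj, coe_fourierMultiplierCLM (hχ.hasTemperateGrowth_dilate _), Sproj,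
    SchwartzMap.fourier_coe]

theorem coe_schwartzDproj (hχ : IsLPCutoff χ) (j : ℤ) (f : 𝓢(EuclideanSpace ℝ (Fin n), ℂ)) :
    ⇑(schwartzDproj χ j f) = Dproj χ j f := by
  have h : ⇑(schwartzDproj χ j f) =
      𝓕⁻ ⇑(𝓕 (schwartzDproj χ j f) : 𝓢(EuclideanSpace ℝ (Fin n), ℂ)) := by
    rw [← SchwartzMap.fourierInv_coe, FourierTransform.fourierInv_fourier_eq]
  rw [h, funext (fourier_schwartzDproj_apply hχ j f), Dproj, SchwartzMap.fourier_coe]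

theorem Sproj_add_one (hχ : IsLPCutoff χ) (j : ℤ) (f : 𝓢(EuclideanSpace ℝ (Fin n), ℂ))
    (x : EuclideanSpace ℝ (Fin n)) : Sproj χ (j + 1) f x = Sproj χ j f x + Dproj χ j f x := by
  simp only [← coe_schwartzSproj hχ, ← coe_schwartzDproj hχ, schwartzDproj, sub_apply,
    add_sub_cancel]

theorem continuous_Sproj (hχ : IsLPCutoff χ) (j : ℤ) (f : 𝓢(EuclideanSpace ℝ (Fin n), ℂ)) :
    Continuous (Sproj χ j f) :=
  coe_schwartzSproj hχ j f ▸ SchwartzMap.continuous _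

theorem continuous_Dproj (hχ : IsLPCutoff χ) (j : ℤ) (f : 𝓢(EuclideanSpace ℝ (Fin n), ℂ)) :
    Continuous (Dproj χ j f) :=
  coe_schwartzDproj hχ j f ▸ SchwartzMap.continuous _

theorem tendsto_Sproj_neg [NeZero n] (hχ : IsLPCutoff χ) (N : ℤ)
    (f : 𝓢(EuclideanSpace ℝ (Fin n), ℂ)) (x : EuclideanSpace ℝ (Fin n)) :
    Tendsto (fun k : ℕ => Sproj χ (N - k) f x) atTop (nhds 0) := by
  simp only [Sproj, Real.fourierInv_eq]
  rw [← integral_zero (EuclideanSpace ℝ (Fin n)) ℂ (μ := volume)]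
  refine tendsto_integral_of_dominated_convergence (fun ξ => ‖𝓕 f ξ‖) (fun k => ?_)
    (𝓕 f).integrable.norm (fun k => Eventually.of_forall fun ξ => ?_) ?_
  · have hχc : Continuous χ := hχ.contDiff.continuous
    have hf : Continuous (𝓕 ⇑f) := (𝓕 f).continuous
    exact Continuous.aestronglyMeasurable (by fun_prop)
  · rw [Circle.norm_smul, norm_mul, SchwartzMap.fourier_coe, Complex.norm_real,
      Real.norm_of_nonneg (hχ.nonneg _)]
    exact mul_le_of_le_one_left (norm_nonneg _) (hχ.le_one _)
  · filter_upwards [Measure.ae_ne volume 0] with ξ hξ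
    have hgrow : Tendsto (fun k : ℕ => (2 : ℝ) ^ k * (2 ^ (-N) * ‖ξ‖)) atTop atTop :=
      (tendsto_pow_atTop_atTop_of_one_lt one_lt_two).atTop_mul_const (by positivity)
    refine tendsto_const_nhds.congr' ?_
    filter_upwards [hgrow.eventually_gt_atTop (4 / 3)] with k hk
    rw [hχ.smul_eq_zero (by positivity)]
    · simp
    · rwa [neg_sub, sub_eq_add_neg, zpow_add₀ two_ne_zero, zpow_natCast, mul_assoc]

theorem enorm_Sproj_le_tsum_enorm_Dproj [NeZero n] (hχ : IsLPCutoff χ) (N : ℤ)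
    (f : 𝓢(EuclideanSpace ℝ (Fin n), ℂ)) (x : EuclideanSpace ℝ (Fin n)) :
    ‖Sproj χ N f x‖ₑ ≤ ∑' k : ℕ, ‖Dproj χ (N - 1 - k) f x‖ₑ := by
  have hstep (K : ℕ) : Sproj χ N f x =
      Sproj χ (N - K) f x + ∑ k ∈ Finset.range K, Dproj χ (N - 1 - k) f x := by
    induction K with
    | zero => simp
    | succ K ih =>
      rw [ih, Finset.sum_range_succ, show N - K = N - (K + 1 : ℕ) + 1 by push_cast; ring,
        Sproj_add_one hχ, show N - 1 - (K : ℤ) = N - (K + 1 : ℕ) by push_cast; ring]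
      ring
  have hlim : Tendsto (fun K : ℕ => ‖Sproj χ (N - K) f x‖ₑ +
      ∑' k : ℕ, ‖Dproj χ (N - 1 - k) f x‖ₑ) atTop
      (nhds (∑' k : ℕ, ‖Dproj χ (N - 1 - k) f x‖ₑ)) := by
    simpa using ((tendsto_Sproj_neg hχ N f x).enorm).add_const _
  refine ge_of_tendsto' hlim fun K => ?_
  calc ‖Sproj χ N f x‖ₑ
      ≤ ‖Sproj χ (N - K) f x‖ₑ + ‖∑ k ∈ Finset.range K, Dproj χ (N - 1 - k) f x‖ₑ :=
        hstep K ▸ enorm_add_le _ _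
    _ ≤ _ := by
        gcongr
        exact (enorm_sum_le _ _).trans (ENNReal.sum_le_tsum _)

theorem besovNorm_top_top (χ : EuclideanSpace ℝ (Fin n) → ℝ) (s : ℝ)
    (f : EuclideanSpace ℝ (Fin n) → ℂ) :
    besovNorm χ s ⊤ ⊤ f = ⨆ j : ℤ, 2 ^ ((j : ℝ) * s) * eLpNorm (Dproj χ j f) ⊤ volume := by
  rw [besovNorm, lqNorm, if_pos rfl]

theorem eLpNorm_Dproj_le_besovNorm (χ : EuclideanSpace ℝ (Fin n) → ℝ) (s : ℝ) (j : ℤ)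
    (f : EuclideanSpace ℝ (Fin n) → ℂ) :
    eLpNorm (Dproj χ j f) ⊤ volume ≤ 2 ^ ((j : ℝ) * -s) * besovNorm χ s ⊤ ⊤ f := by
  rw [besovNorm_top_top]
  calc eLpNorm (Dproj χ j f) ⊤ volume
      = 2 ^ ((j : ℝ) * -s) * (2 ^ ((j : ℝ) * s) * eLpNorm (Dproj χ j f) ⊤ volume) := by
        rw [← mul_assoc, ← two_rpow_add, ← mul_add, neg_add_cancel, mul_zero, ENNReal.rpow_zero,
          one_mul]
    _ ≤ _ := by
        gcongr
        exact le_iSup (fun j : ℤ => (2 : ℝ≥0∞) ^ ((j : ℝ) * s) * eLpNorm (Dproj χ j f) ⊤ volume) j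

theorem enorm_Sproj_le_besovNorm [NeZero n] (hχ : IsLPCutoff χ) {α : ℝ} (hα : 0 < α) (N : ℤ)
    (f : 𝓢(EuclideanSpace ℝ (Fin n), ℂ)) (x : EuclideanSpace ℝ (Fin n)) :
    ‖Sproj χ N f x‖ₑ ≤ dyadicSum α * besovNorm χ (-α) ⊤ ⊤ f * 2 ^ ((N : ℝ) * α) :=
  calc ‖Sproj χ N f x‖ₑ
      ≤ ∑' k : ℕ, ‖Dproj χ (N - 1 - k) f x‖ₑ := enorm_Sproj_le_tsum_enorm_Dproj hχ N f x
    _ ≤ ∑' k : ℕ, 2 ^ (((N : ℝ) - k) * α) * besovNorm χ (-α) ⊤ ⊤ f := by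
        refine ENNReal.tsum_le_tsum fun k => ?_
        refine (enorm_le_eLpNorm_top (μ := volume) (continuous_Dproj hχ _ f) x).trans
          ((eLpNorm_Dproj_le_besovNorm χ (-α) _ f).trans ?_)
        rw [neg_neg]
        gcongr
        · exact one_le_two
        · push_cast
          linarith
    _ = dyadicSum α * besovNorm χ (-α) ⊤ ⊤ f * 2 ^ ((N : ℝ) * α) := by
        rw [ENNReal.tsum_mul_right, tsum_two_rpow_sub_natCast]
        ring

theorem lintegral_enorm_sub_Sproj_sq_le (hχ : IsLPCutoff χ) (N : ℤ)
    (f : 𝓢(EuclideanSpace ℝ (Fin n), ℂ)) :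
    ∫⁻ x, ‖f x - Sproj χ N f x‖ₑ ^ 2 ≤
      ∫⁻ ξ, if (2 : ℝ≥0∞) ^ N ≤ 2 * ‖ξ‖ₑ then ‖𝓕 f ξ‖ₑ ^ 2 else 0 := by
  simp only [← coe_schwartzSproj hχ, ← sub_apply]
  rw [← lintegral_enorm_fourier_sq, schwartz_fourier_sub]
  refine lintegral_mono fun ξ => ?_
  simp only [sub_apply, fourier_schwartzSproj_apply hχ]
  rw [← one_sub_mul, ← Complex.ofReal_one, ← Complex.ofReal_sub]
  split_ifs with h
  · rw [enorm_mul]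
    gcongr
    refine mul_le_of_le_one_left zero_le ?_
    rw [← ofReal_norm, ENNReal.ofReal_le_one, Complex.norm_real,
      Real.norm_of_nonneg (sub_nonneg.2 (hχ.le_one _))]
    exact sub_le_self _ (hχ.nonneg _)
  · have hlow : (2 : ℝ) ^ (-N) * ‖ξ‖ ≤ 3 / 4 := by
      contrapose! h
      have hreal : (2 : ℝ) ^ N ≤ 2 * ‖ξ‖ := by
        rw [zpow_neg, lt_inv_mul_iff₀ (by positivity)] at h
        linarith [norm_nonneg ξ]
      have hpow : ENNReal.ofReal (2 ^ N) = 2 ^ N := by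
        rw [← Real.rpow_intCast, ← ENNReal.ofReal_rpow_of_pos two_pos, ENNReal.rpow_intCast,
          ENNReal.ofReal_ofNat]
      simpa [ENNReal.ofReal_mul, hpow] using ENNReal.ofReal_le_ofReal hreal
    rw [hχ.smul_eq_one (by positivity) hlow]
    simp

end LittlewoodPaley

section SobolevEnergy

variable {V : Type*} [NormedAddCommGroup V] [InnerProductSpace ℝ V] [FiniteDimensional ℝ V]
  [MeasurableSpace V] [BorelSpace V]

/-- The energy `∫ |ξ|^α |𝓕 f(ξ)|² dξ`, i.e. the squared homogeneous Sobolev norm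
`‖f‖²_{Ḣ^{α/2}}` (up to the `2π` convention of the Fourier transform). -/
def sobolevEnergy (α : ℝ) (f : 𝓢(V, ℂ)) : ℝ≥0∞ :=
  ∫⁻ ξ, ‖ξ‖ₑ ^ α * ‖𝓕 f ξ‖ₑ ^ 2

theorem measurable_sobolevEnergy_integrand (α : ℝ) (f : 𝓢(V, ℂ)) :
    Measurable fun ξ : V => ‖ξ‖ₑ ^ α * ‖𝓕 f ξ‖ₑ ^ 2 := by
  have hF : Continuous (𝓕 f : 𝓢(V, ℂ)) := SchwartzMap.continuous _
  exact (measurable_enorm.pow_const α).mul (hF.enorm.measurable.pow_const 2)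

theorem sobolevEnergy_zero (f : 𝓢(V, ℂ)) : sobolevEnergy 0 f = ∫⁻ x, ‖f x‖ₑ ^ 2 := by
  simp only [sobolevEnergy, ENNReal.rpow_zero, one_mul, lintegral_enorm_fourier_sq]

theorem eq_zero_of_sobolevEnergy_eq_zero [Nontrivial V] {α : ℝ} {f : 𝓢(V, ℂ)}
    (h : sobolevEnergy α f = 0) : f = 0 := by
  rw [sobolevEnergy, lintegral_eq_zero_iff (measurable_sobolevEnergy_integrand α f)] at h
  have hae : (𝓕 f : 𝓢(V, ℂ)) =ᵐ[volume] fun _ => (0 : ℂ) := by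
    filter_upwards [h, Measure.ae_ne volume 0] with ξ hξ hξ0
    simpa [ENNReal.rpow_eq_zero_iff, hξ0] using hξ
  have hzero := ((𝓕 f).continuous.ae_eq_iff_eq volume continuous_const).1 hae
  refine schwartz_ext_fourier fun ξ => ?_
  rw [FourierTransform.fourier_zero, congrFun hzero ξ, zero_apply]

theorem sobolevEnergy_add_le_rpow_mul_rpow {a b p q : ℝ} (ha : 0 ≤ a) (hb : 0 ≤ b) (hp : 0 ≤ p)
    (hq : 0 ≤ q) (hpq : p + q = 1) (f : 𝓢(V, ℂ)) :
    sobolevEnergy (p * a + q * b) f ≤ sobolevEnergy a f ^ p * sobolevEnergy b f ^ q := by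
  refine le_of_eq_of_le (lintegral_congr fun ξ => ?_) (ENNReal.lintegral_mul_norm_pow_le
    (measurable_sobolevEnergy_integrand a f).aemeasurable
    (measurable_sobolevEnergy_integrand b f).aemeasurable hp hq hpq)
  calc ‖ξ‖ₑ ^ (p * a + q * b) * ‖𝓕 f ξ‖ₑ ^ 2
      = (‖ξ‖ₑ ^ (p * a) * ‖ξ‖ₑ ^ (q * b)) * ((‖𝓕 f ξ‖ₑ ^ 2) ^ p * (‖𝓕 f ξ‖ₑ ^ 2) ^ q) := by
        rw [ENNReal.rpow_add_of_nonneg _ _ (by positivity) (by positivity),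
          ← ENNReal.rpow_add_of_nonneg (x := ‖𝓕 f ξ‖ₑ ^ 2) _ _ hp hq, hpq, ENNReal.rpow_one]
    _ = _ := by
        rw [ENNReal.mul_rpow_of_nonneg _ _ hp, ENNReal.mul_rpow_of_nonneg _ _ hq,
          ← ENNReal.rpow_mul, ← ENNReal.rpow_mul, mul_comm a, mul_comm b]
        ring

end SobolevEnergy

section RefinedSobolev

variable {n : ℕ}

theorem tsum_two_rpow_mul_lintegral_le_sobolevEnergy {α : ℝ} (hα : 0 < α)
    (f : 𝓢(EuclideanSpace ℝ (Fin n), ℂ)) :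
    ∑' N : ℤ, (2 : ℝ≥0∞) ^ ((N : ℝ) * α) *
        ∫⁻ ξ, (if (2 : ℝ≥0∞) ^ N ≤ 2 * ‖ξ‖ₑ then ‖𝓕 f ξ‖ₑ ^ 2 else 0) ≤
      dyadicSum α * 2 ^ α * sobolevEnergy α f := by
  have hF : Measurable fun ξ => ‖𝓕 f ξ‖ₑ ^ 2 :=
    (𝓕 f).continuous.enorm.measurable.pow_const 2
  have hmeas (N : ℤ) : Measurable fun ξ : EuclideanSpace ℝ (Fin n) =>
      if (2 : ℝ≥0∞) ^ N ≤ 2 * ‖ξ‖ₑ then ‖𝓕 f ξ‖ₑ ^ 2 else 0 :=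
    Measurable.ite (measurableSet_le measurable_const (by fun_prop)) hF measurable_const
  calc _ = ∫⁻ ξ, ∑' N : ℤ, (2 : ℝ≥0∞) ^ ((N : ℝ) * α) *
        (if (2 : ℝ≥0∞) ^ N ≤ 2 * ‖ξ‖ₑ then ‖𝓕 f ξ‖ₑ ^ 2 else 0) := by
        rw [lintegral_tsum fun N => ((hmeas N).const_mul _).aemeasurable]
        exact tsum_congr fun N => (lintegral_const_mul _ (hmeas N)).symm
    _ = ∫⁻ ξ, (∑' N : ℤ, if (2 : ℝ≥0∞) ^ N ≤ 2 * ‖ξ‖ₑ then (2 : ℝ≥0∞) ^ ((N : ℝ) * α) else 0) *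
        ‖𝓕 f ξ‖ₑ ^ 2 := by
        simp only [← ENNReal.tsum_mul_right, mul_ite, ite_mul, mul_zero, zero_mul]
    _ ≤ ∫⁻ ξ, dyadicSum α * (2 * ‖ξ‖ₑ) ^ α * ‖𝓕 f ξ‖ₑ ^ 2 := by
        exact lintegral_mono fun ξ => mul_le_mul_left (tsum_two_rpow_of_zpow_le hα _) _
    _ = dyadicSum α * 2 ^ α * sobolevEnergy α f := by
        rw [sobolevEnergy, ← lintegral_const_mul _ (measurable_sobolevEnergy_integrand α f)]
        refine lintegral_congr fun ξ => ?_
        rw [ENNReal.mul_rpow_of_nonneg _ _ hα.le]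
        ring

variable {χ : EuclideanSpace ℝ (Fin n) → ℝ}

theorem lintegral_enorm_cube_le_of_enorm_Sproj_le (hχ : IsLPCutoff χ) {α : ℝ} (hα : 0 < α)
    {c : ℝ≥0∞} (hc0 : c ≠ 0) (hc : c ≠ ∞) (f : 𝓢(EuclideanSpace ℝ (Fin n), ℂ))
    (hf : ∀ N x, ‖Sproj χ N f x‖ₑ ≤ c * 2 ^ ((N : ℝ) * α)) :
    ∫⁻ x, ‖f x‖ₑ ^ 3 ≤ 8 * 2 ^ α * c * (dyadicSum α * 2 ^ α * sobolevEnergy α f) := by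
  have hmeas (N : ℤ) : Measurable fun x => ‖f x - Sproj χ N f x‖ₑ ^ 2 :=
    (f.continuous.sub (continuous_Sproj hχ N f)).enorm.measurable.pow_const 2
  calc ∫⁻ x, ‖f x‖ₑ ^ 3
      ≤ ∫⁻ x, 8 * 2 ^ α * c * ∑' N : ℤ, 2 ^ ((N : ℝ) * α) * ‖f x - Sproj χ N f x‖ₑ ^ 2 :=
        lintegral_mono fun x => enorm_cube_le_tsum hα hc0 hc (f x) _ fun N => hf N x
    _ = 8 * 2 ^ α * c * ∑' N : ℤ, 2 ^ ((N : ℝ) * α) * ∫⁻ x, ‖f x - Sproj χ N f x‖ₑ ^ 2 := by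
        have hmeas' (N : ℤ) := (hmeas N).const_mul ((2 : ℝ≥0∞) ^ ((N : ℝ) * α))
        rw [lintegral_const_mul _ (Measurable.tsum hmeas'),
          lintegral_tsum fun N => (hmeas' N).aemeasurable]
        congr! 3 with N
        exact lintegral_const_mul _ (hmeas N)
    _ ≤ 8 * 2 ^ α * c * (dyadicSum α * 2 ^ α * sobolevEnergy α f) := by
        gcongr
        refine le_trans (ENNReal.tsum_le_tsum fun N => ?_)
          (tsum_two_rpow_mul_lintegral_le_sobolevEnergy hα f)
        exact mul_le_mul_right (lintegral_enorm_sub_Sproj_sq_le hχ N f) _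

variable [NeZero n]

theorem eq_zero_of_besovNorm_eq_zero (hχ : IsLPCutoff χ) {α : ℝ} (hα : 0 < α)
    {f : 𝓢(EuclideanSpace ℝ (Fin n), ℂ)} (h : besovNorm χ (-α) ⊤ ⊤ f = 0) : f = 0 := by
  have hS (N : ℤ) : schwartzSproj χ N f = 0 := by
    ext x
    have hx := enorm_Sproj_le_besovNorm hχ hα N f x
    simpa [h, coe_schwartzSproj hχ] using hx
  refine schwartz_ext_fourier fun ξ => ?_
  obtain ⟨N, hN⟩ := pow_unbounded_of_one_lt (4 / 3 * ‖ξ‖) one_lt_two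
  have hlow : (2 : ℝ) ^ (-(N : ℤ)) * ‖ξ‖ ≤ 3 / 4 := by
    rw [zpow_neg, zpow_natCast, inv_mul_le_iff₀ (by positivity)]
    linarith
  have hξ := fourier_schwartzSproj_apply hχ N f ξ
  rw [hS, hχ.smul_eq_one (by positivity) hlow, Complex.ofReal_one, one_mul] at hξ
  exact hξ.symm

theorem exists_lintegral_enorm_cube_le_besovNorm_mul_sobolevEnergy (hχ : IsLPCutoff χ) {α : ℝ}
    (hα : 0 < α) : ∃ C ≠ ∞, ∀ f : 𝓢(EuclideanSpace ℝ (Fin n), ℂ),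
      ∫⁻ x, ‖f x‖ₑ ^ 3 ≤ C * (besovNorm χ (-α) ⊤ ⊤ f * sobolevEnergy α f) := by
  refine ⟨8 * 2 ^ α * dyadicSum α * (dyadicSum α * 2 ^ α), ?_, fun f => ?_⟩
  · have h2 := two_rpow_ne_top α
    have hd := dyadicSum_ne_top hα
    finiteness
  rcases eq_or_ne f 0 with rfl | hf
  · simp
  have hE : sobolevEnergy α f ≠ 0 := fun h => hf (eq_zero_of_sobolevEnergy_eq_zero h)
  have hB : besovNorm χ (-α) ⊤ ⊤ f ≠ 0 := fun h => hf (eq_zero_of_besovNorm_eq_zero hχ hα h)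
  rcases eq_or_ne (besovNorm χ (-α) ⊤ ⊤ f) ∞ with hB' | hB'
  · simp [hB', hE, dyadicSum_ne_zero, ENNReal.mul_top]
  · refine (lintegral_enorm_cube_le_of_enorm_Sproj_le hχ hα
      (mul_ne_zero (dyadicSum_ne_zero α) hB) (ENNReal.mul_ne_top (dyadicSum_ne_top hα) hB') f
      fun N x => enorm_Sproj_le_besovNorm hχ hα N f x).trans_eq ?_
    ring

end RefinedSobolev

section HomogeneousMultiplier

variable {n : ℕ} {χ : EuclideanSpace ℝ (Fin n) → ℝ} {m : EuclideanSpace ℝ (Fin n) → ℂ}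

/-- A symbol `m` truncated to the annulus `3/8 ≤ |ξ| ≤ 16/3` by a cutoff equal to `1` on the
support `3/4 ≤ |ξ| ≤ 8/3` of `φ̂`. For `m` homogeneous of degree `0`, its dilates agree with `m`
on the Littlewood–Paley annuli. -/
def annulusSymbol (χ : EuclideanSpace ℝ (Fin n) → ℝ) (m : EuclideanSpace ℝ (Fin n) → ℂ)
    (ξ : EuclideanSpace ℝ (Fin n)) : ℂ :=
  ((χ ((1 / 4 : ℝ) • ξ) - χ ((2 : ℝ) • ξ) : ℝ) : ℂ) * m ξ

theorem hasCompactSupport_annulusSymbol (hχ : IsLPCutoff χ) (m : EuclideanSpace ℝ (Fin n) → ℂ) :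
    HasCompactSupport (annulusSymbol χ m) := by
  refine HasCompactSupport.intro (isCompact_closedBall 0 (16 / 3)) fun ξ hξ => ?_
  rw [mem_closedBall_zero_iff, not_le] at hξ
  rw [annulusSymbol, hχ.smul_eq_zero (by norm_num) (by linarith),
    hχ.smul_eq_zero (by norm_num) (by linarith), sub_zero, Complex.ofReal_zero, zero_mul]

theorem contDiff_annulusSymbol (hχ : IsLPCutoff χ)
    (hm : ContDiffOn ℝ ((⊤ : ℕ∞) : WithTop ℕ∞) m {0}ᶜ) :
    ContDiff ℝ ((⊤ : ℕ∞) : WithTop ℕ∞) (annulusSymbol χ m) := by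
  refine contDiff_iff_contDiffAt.2 fun ξ => ?_
  rcases eq_or_ne ξ 0 with rfl | hξ
  · refine (contDiffAt_const (c := (0 : ℂ))).congr_of_eventuallyEq ?_
    filter_upwards [Metric.ball_mem_nhds 0 (by norm_num : (0 : ℝ) < 3 / 8)] with ξ hξ
    rw [mem_ball_zero_iff] at hξ
    rw [annulusSymbol, hχ.smul_eq_one (by norm_num) (by linarith [norm_nonneg ξ]),
      hχ.smul_eq_one (by norm_num) (by linarith), sub_self, Complex.ofReal_zero, zero_mul]
  · have hcutoff : ContDiff ℝ ((⊤ : ℕ∞) : WithTop ℕ∞) fun ξ : EuclideanSpace ℝ (Fin n) =>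
        χ ((1 / 4 : ℝ) • ξ) - χ ((2 : ℝ) • ξ) := by
      have := hχ.contDiff
      fun_prop
    exact (Complex.ofRealCLM.contDiff.comp hcutoff).contDiffAt.mul
      (hm.contDiffAt (isOpen_compl_singleton.mem_nhds hξ))

theorem annulusSymbol_mul_of_homogeneous (hχ : IsLPCutoff χ)
    (hm : ∀ t : ℝ, 0 < t → ∀ ξ, m (t • ξ) = m ξ) (j : ℤ) (ξ : EuclideanSpace ℝ (Fin n)) :
    annulusSymbol χ m ((2 : ℝ) ^ (-j) • ξ) *
        ((χ ((2 : ℝ) ^ (-(j + 1)) • ξ) - χ ((2 : ℝ) ^ (-j) • ξ) : ℝ) : ℂ) =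
      m ξ * ((χ ((2 : ℝ) ^ (-(j + 1)) • ξ) - χ ((2 : ℝ) ^ (-j) • ξ) : ℝ) : ℂ) := by
  have hsplit : (2 : ℝ) ^ (-(j + 1)) • ξ = (1 / 2 : ℝ) • ((2 : ℝ) ^ (-j) • ξ) := by
    rw [smul_smul, neg_add, zpow_add₀ two_ne_zero, mul_comm]
    norm_num
  rw [hsplit, ← hm _ (by positivity : (0 : ℝ) < 2 ^ (-j)) ξ]
  set η := (2 : ℝ) ^ (-j) • ξ
  rcases le_or_gt ‖η‖ (3 / 4) with hlow | hlow
  · rw [hχ.eq_one hlow, hχ.smul_eq_one (by norm_num) (by linarith [norm_nonneg η]), sub_self,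
      Complex.ofReal_zero, mul_zero, mul_zero]
  rcases le_or_gt ‖η‖ (8 / 3) with hhigh | hhigh
  · rw [annulusSymbol, hχ.smul_eq_one (t := 1 / 4) (by norm_num) (by linarith),
      hχ.smul_eq_zero (t := 2) (by norm_num) (by linarith), sub_zero, Complex.ofReal_one, one_mul]
  · rw [hχ.eq_zero (ξ := η) (by linarith), hχ.smul_eq_zero (t := 1 / 2) (by norm_num) (by linarith),
      sub_self, Complex.ofReal_zero, mul_zero, mul_zero]

theorem exists_eLpNorm_top_fourierMultiplierCLM_annulusSymbol_le (hχ : IsLPCutoff χ)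
    (hm : ContDiffOn ℝ ((⊤ : ℕ∞) : WithTop ℕ∞) m {0}ᶜ) :
    ∃ A ≠ ∞, ∀ (t : ℝ) (f : 𝓢(EuclideanSpace ℝ (Fin n), ℂ)),
      eLpNorm (SchwartzMap.fourierMultiplierCLM ℂ (fun ξ => annulusSymbol χ m (t • ξ)) f) ⊤ volume ≤
        A * eLpNorm f ⊤ volume := by
  have hfinite (g : 𝓢(EuclideanSpace ℝ (Fin n), ℂ)) : eLpNorm g 1 volume ≠ ∞ :=
    (g.memLp 1 volume).eLpNorm_ne_top
  obtain ⟨a, ha⟩ : ∃ a : 𝓢(EuclideanSpace ℝ (Fin n), ℂ), annulusSymbol χ m = a :=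
    ⟨(hasCompactSupport_annulusSymbol hχ m).toSchwartzMap (contDiff_annulusSymbol hχ hm), rfl⟩
  rw [ha]
  exact ⟨_, hfinite (𝓕⁻ a), fun t f => eLpNorm_top_fourierMultiplierCLM_dilate_le a f t⟩

theorem schwartzDproj_eq_sum_fourierMultiplierCLM {ι : Type*} [Fintype ι] (hχ : IsLPCutoff χ)
    {m : ι → EuclideanSpace ℝ (Fin n) → ℂ}
    (hm : ∀ l, ContDiffOn ℝ ((⊤ : ℕ∞) : WithTop ℕ∞) (m l) {0}ᶜ)
    (hhom : ∀ l, ∀ t : ℝ, 0 < t → ∀ ξ, m l (t • ξ) = m l ξ)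
    {g : 𝓢(EuclideanSpace ℝ (Fin n), ℂ)} {f : ι → 𝓢(EuclideanSpace ℝ (Fin n), ℂ)}
    (hg : ∀ ξ, 𝓕 g ξ = ∑ l, m l ξ * 𝓕 (f l) ξ) (j : ℤ) :
    schwartzDproj χ j g = ∑ l, SchwartzMap.fourierMultiplierCLM ℂ
      (fun ξ => annulusSymbol χ (m l) ((2 : ℝ) ^ (-j) • ξ)) (schwartzDproj χ j (f l)) := by
  have htemp (l : ι) : (fun ξ => annulusSymbol χ (m l) ((2 : ℝ) ^ (-j) • ξ)).HasTemperateGrowth :=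
    ((hasCompactSupport_annulusSymbol hχ (m l)).hasTemperateGrowth
      (contDiff_annulusSymbol hχ (hm l))).comp
        (((2 : ℝ) ^ (-j)) • ContinuousLinearMap.id ℝ _).hasTemperateGrowth
  refine schwartz_ext_fourier fun ξ => ?_
  simp only [FourierTransform.fourier_sum, sum_apply, fourier_schwartzDproj_apply hχ,
    fourier_fourierMultiplierCLM_apply (htemp _), hg, Finset.mul_sum, ← mul_assoc,
    annulusSymbol_mul_of_homogeneous hχ (hhom _)]
  exact Finset.sum_congr rfl fun l _ => by ring

theorem exists_besovNorm_top_top_le_of_homogeneous {ι : Type*} [Fintype ι] (hχ : IsLPCutoff χ)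
    {m : ι → EuclideanSpace ℝ (Fin n) → ℂ}
    (hm : ∀ l, ContDiffOn ℝ ((⊤ : ℕ∞) : WithTop ℕ∞) (m l) {0}ᶜ)
    (hhom : ∀ l, ∀ t : ℝ, 0 < t → ∀ ξ, m l (t • ξ) = m l ξ) :
    ∃ A ≠ ∞, ∀ (s : ℝ) (g : 𝓢(EuclideanSpace ℝ (Fin n), ℂ))
      (f : ι → 𝓢(EuclideanSpace ℝ (Fin n), ℂ)), (∀ ξ, 𝓕 g ξ = ∑ l, m l ξ * 𝓕 (f l) ξ) →
      besovNorm χ s ⊤ ⊤ g ≤ A * ⨆ l, besovNorm χ s ⊤ ⊤ (f l) := by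
  choose A hA hbound using fun l =>
    exists_eLpNorm_top_fourierMultiplierCLM_annulusSymbol_le hχ (hm l)
  refine ⟨∑ l, A l, ENNReal.sum_ne_top.2 fun l _ => hA l, fun s g f hg => ?_⟩
  rw [besovNorm_top_top χ s g]
  refine iSup_le fun j => ?_
  have hDproj : eLpNorm (Dproj χ j g) ⊤ volume ≤ ∑ l, A l * eLpNorm (Dproj χ j (f l)) ⊤ volume := by
    simp only [← coe_schwartzDproj hχ]
    rw [schwartzDproj_eq_sum_fourierMultiplierCLM hχ hm hhom hg, FunLike.coe_sum]
    refine (eLpNorm_sum_le (fun l _ => (SchwartzMap.continuous _).aestronglyMeasurable)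
      le_top).trans (Finset.sum_le_sum fun l _ => hbound l _ _)
  calc 2 ^ ((j : ℝ) * s) * eLpNorm (Dproj χ j g) ⊤ volume
      ≤ ∑ l, A l * (2 ^ ((j : ℝ) * s) * eLpNorm (Dproj χ j (f l)) ⊤ volume) := by
        refine (mul_le_mul_right hDproj _).trans_eq ?_
        simp only [Finset.mul_sum, mul_left_comm]
    _ ≤ ∑ l, A l * ⨆ l, besovNorm χ s ⊤ ⊤ (f l) := by
        gcongr with l
        refine le_iSup_of_le l ?_
        rw [besovNorm_top_top]
        exact le_iSup (fun j : ℤ => 2 ^ ((j : ℝ) * s) * eLpNorm (Dproj χ j (f l)) ⊤ volume) j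
    _ = _ := (Finset.sum_mul _ _ _).symm

theorem sobolevEnergy_le_of_fourier_eq_sum {ι : Type*} [Fintype ι] (α : ℝ)
    {m : ι → EuclideanSpace ℝ (Fin n) → ℂ} (hm : ∀ l ξ, ‖m l ξ‖ ≤ 1)
    {g : 𝓢(EuclideanSpace ℝ (Fin n), ℂ)} {f : ι → 𝓢(EuclideanSpace ℝ (Fin n), ℂ)}
    (hg : ∀ ξ, 𝓕 g ξ = ∑ l, m l ξ * 𝓕 (f l) ξ) :
    sobolevEnergy α g ≤ Fintype.card ι * ∑ l, sobolevEnergy α (f l) := by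
  have hpoint (ξ : EuclideanSpace ℝ (Fin n)) :
      ‖𝓕 g ξ‖ₑ ^ 2 ≤ Fintype.card ι * ∑ l, ‖𝓕 (f l) ξ‖ₑ ^ 2 := by
    rw [hg]
    refine (enorm_sum_sq_le_card_mul_sum _ _).trans ?_
    rw [Finset.card_univ]
    gcongr with l
    rw [enorm_mul]
    refine mul_le_of_le_one_left zero_le ?_
    rw [← ofReal_norm]
    exact ENNReal.ofReal_le_one.2 (hm l ξ)
  calc sobolevEnergy α g
      ≤ ∫⁻ ξ, Fintype.card ι * ∑ l, ‖ξ‖ₑ ^ α * ‖𝓕 (f l) ξ‖ₑ ^ 2 := by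
        refine lintegral_mono fun ξ => (mul_le_mul_right (hpoint ξ) _).trans_eq ?_
        rw [mul_left_comm, Finset.mul_sum]
    _ = Fintype.card ι * ∑ l, sobolevEnergy α (f l) := by
        have hmeas (l : ι) := measurable_sobolevEnergy_integrand α (f l)
        rw [lintegral_const_mul _ (Finset.univ.measurable_fun_sum fun l _ => hmeas l),
          lintegral_finsetSum _ fun l _ => hmeas l]
        rfl

end HomogeneousMultiplier

section Complexify

variable {V : Type*} [NormedAddCommGroup V] [NormedSpace ℝ V]

open LineDeriv

/-- A real Schwartz function regarded as a complex one, so that `𝓕` applies to it. -/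
def complexify : 𝓢(V, ℝ) →L[ℝ] 𝓢(V, ℂ) :=
  SchwartzMap.postcompCLM Complex.ofRealCLM

theorem complexify_apply (f : 𝓢(V, ℝ)) (x : V) : complexify f x = (f x : ℂ) := rfl

theorem enorm_complexify_apply (f : 𝓢(V, ℝ)) (x : V) : ‖complexify f x‖ₑ = ‖f x‖ₑ := by
  rw [complexify_apply, ← ofReal_norm, Complex.norm_real, ofReal_norm]

theorem lineDerivOp_complexify (m : V) (f : 𝓢(V, ℝ)) :
    ∂_{m} (complexify f) = complexify (∂_{m} f) := by
  ext x
  rw [complexify_apply, SchwartzMap.lineDerivOp_apply_eq_fderiv,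
    SchwartzMap.lineDerivOp_apply_eq_fderiv]
  have hcomp : HasFDerivAt (complexify f) (Complex.ofRealCLM ∘L fderiv ℝ f x) x :=
    (Complex.ofRealCLM.hasFDerivAt (x := f x)).comp x f.differentiableAt.hasFDerivAt
  rw [hcomp.fderiv]
  rfl

end Complexify

section Derivatives

variable {V : Type*} [NormedAddCommGroup V] [InnerProductSpace ℝ V] [FiniteDimensional ℝ V]
  [MeasurableSpace V] [BorelSpace V]

open LineDeriv

theorem fourier_lineDerivOp_apply (m : V) (f : 𝓢(V, ℂ)) (ξ : V) :
    𝓕 (∂_{m} f) ξ = 2 * π * Complex.I * (inner ℝ ξ m : ℝ) * 𝓕 f ξ := by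
  have hinner : (inner ℝ · m : V → ℝ).HasTemperateGrowth := by fun_prop
  rw [SchwartzMap.fourier_lineDerivOp_eq, smul_apply, SchwartzMap.smulLeftCLM_apply_apply hinner,
    smul_eq_mul, Complex.real_smul, mul_assoc _ _ (𝓕 f ξ)]

theorem sum_lintegral_enorm_lineDerivOp_sq {ι : Type*} [Fintype ι] (b : OrthonormalBasis ι ℝ V)
    (f : 𝓢(V, ℂ)) :
    ∑ i, ∫⁻ x, ‖∂_{b i} f x‖ₑ ^ 2 = ‖2 * π‖ₑ ^ 2 * sobolevEnergy 2 f := by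
  have hparseval (ξ : V) : ∑ i, ‖inner ℝ ξ (b i)‖ₑ ^ 2 = ‖ξ‖ₑ ^ (2 : ℝ) := by
    simp only [ENNReal.rpow_ofNat, ← ofReal_norm, ← ENNReal.ofReal_pow (norm_nonneg _)]
    rw [← ENNReal.ofReal_sum_of_nonneg fun _ _ => by positivity, b.sum_sq_norm_inner_left]
  have hpoint (ξ : V) : ∑ i, ‖𝓕 (∂_{b i} f) ξ‖ₑ ^ 2 =
      ‖2 * π‖ₑ ^ 2 * (‖ξ‖ₑ ^ (2 : ℝ) * ‖𝓕 f ξ‖ₑ ^ 2) := by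
    have hnorm (i : ι) : ‖𝓕 (∂_{b i} f) ξ‖ₑ ^ 2 =
        ‖2 * π‖ₑ ^ 2 * (‖inner ℝ ξ (b i)‖ₑ ^ 2 * ‖𝓕 f ξ‖ₑ ^ 2) := by
      simp [fourier_lineDerivOp_apply, mul_pow, mul_assoc, ← ofReal_norm]
    simp only [hnorm, ← Finset.mul_sum, ← Finset.sum_mul, hparseval]
  have hmeas (i : ι) : Measurable fun ξ => ‖𝓕 (∂_{b i} f) ξ‖ₑ ^ 2 :=
    (SchwartzMap.continuous _).enorm.measurable.pow_const 2
  calc ∑ i, ∫⁻ x, ‖∂_{b i} f x‖ₑ ^ 2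
      = ∑ i, ∫⁻ ξ, ‖𝓕 (∂_{b i} f) ξ‖ₑ ^ 2 :=
        Finset.sum_congr rfl fun i _ => (lintegral_enorm_fourier_sq _).symm
    _ = ∫⁻ ξ, ‖2 * π‖ₑ ^ 2 * (‖ξ‖ₑ ^ (2 : ℝ) * ‖𝓕 f ξ‖ₑ ^ 2) := by
        rw [← lintegral_finsetSum _ fun i _ => hmeas i, lintegral_congr hpoint]
    _ = ‖2 * π‖ₑ ^ 2 * sobolevEnergy 2 f :=
        lintegral_const_mul _ (measurable_sobolevEnergy_integrand 2 f)

theorem sobolevEnergy_two_le_sum_lineDerivOp {ι : Type*} [Fintype ι] (b : OrthonormalBasis ι ℝ V)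
    (f : 𝓢(V, ℂ)) : sobolevEnergy 2 f ≤ ∑ i, ∫⁻ x, ‖∂_{b i} f x‖ₑ ^ 2 := by
  have htwo_pi : 1 ≤ ‖2 * π‖ₑ := by
    rw [Real.enorm_eq_ofReal (by positivity), ENNReal.one_le_ofReal]
    linarith [Real.pi_gt_three]
  rw [sum_lintegral_enorm_lineDerivOp_sq]
  exact le_mul_of_one_le_left zero_le (one_le_pow₀ htwo_pi)

theorem sobolevEnergy_zero_complexify (f : 𝓢(V, ℝ)) :
    sobolevEnergy 0 (complexify f) = eLpNorm f 2 volume ^ (2 : ℝ) := by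
  simp only [sobolevEnergy_zero, enorm_complexify_apply, eLpNorm_two_sq]

end Derivatives

section BiotSavart

/-- The symbol `ξ_a ξ_b / |ξ|²` of the double Riesz transform, up to sign. Its value at `0` is
`0`. -/
def rieszSymbol {n : ℕ} (a b : Fin n) (ξ : EuclideanSpace ℝ (Fin n)) : ℂ :=
  ((ξ a * ξ b / ‖ξ‖ ^ 2 : ℝ) : ℂ)

theorem norm_rieszSymbol_le_one {n : ℕ} (a b : Fin n) (ξ : EuclideanSpace ℝ (Fin n)) :
    ‖rieszSymbol a b ξ‖ ≤ 1 := by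
  rw [rieszSymbol, Complex.norm_real, norm_div, norm_mul, norm_pow, norm_norm, pow_two]
  exact div_le_one_of_le₀ (mul_le_mul (PiLp.norm_apply_le ξ a) (PiLp.norm_apply_le ξ b)
    (norm_nonneg _) (norm_nonneg _)) (by positivity)

theorem rieszSymbol_smul {n : ℕ} (a b : Fin n) {t : ℝ} (ht : t ≠ 0)
    (ξ : EuclideanSpace ℝ (Fin n)) : rieszSymbol a b (t • ξ) = rieszSymbol a b ξ := by
  simp only [rieszSymbol, PiLp.smul_apply, smul_eq_mul, norm_smul, mul_pow, Real.norm_eq_abs,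
    sq_abs]
  rw [mul_mul_mul_comm, ← pow_two, mul_div_mul_left _ _ (pow_ne_zero 2 ht)]

theorem contDiffOn_rieszSymbol {n : ℕ} (a b : Fin n) :
    ContDiffOn ℝ ((⊤ : ℕ∞) : WithTop ℕ∞) (rieszSymbol a b) {0}ᶜ := by
  have hreal : ContDiffOn ℝ ((⊤ : ℕ∞) : WithTop ℕ∞)
      (fun ξ : EuclideanSpace ℝ (Fin n) => ξ a * ξ b / ‖ξ‖ ^ 2) {0}ᶜ :=
    ContDiffOn.div (by fun_prop) (contDiff_norm_sq ℝ).contDiffOn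
      fun ξ hξ => pow_ne_zero 2 (norm_ne_zero_iff.2 hξ)
  exact Complex.ofRealCLM.contDiff.comp_contDiffOn hreal

/-- The partial derivative `pd i f` of a real Schwartz function, as a Schwartz function. -/
def schwartzPd (i : Fin 3) (f : 𝓢(E3, ℝ)) : 𝓢(E3, ℝ) :=
  LineDeriv.lineDerivOp (EuclideanSpace.single i (1 : ℝ) : E3) f

theorem coe_schwartzPd (i : Fin 3) (f : 𝓢(E3, ℝ)) : ⇑(schwartzPd i f) = pd i f :=
  funext fun x => SchwartzMap.lineDerivOp_apply_eq_fderiv _ f x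

theorem fourier_complexify_schwartzPd (i : Fin 3) (f : 𝓢(E3, ℝ)) (ξ : E3) :
    𝓕 (complexify (schwartzPd i f)) ξ = 2 * π * Complex.I * (ξ i : ℂ) * 𝓕 (complexify f) ξ := by
  rw [schwartzPd, ← lineDerivOp_complexify, fourier_lineDerivOp_apply,
    EuclideanSpace.inner_single_right, conj_trivial, one_mul]

theorem sobolevEnergy_two_complexify_le (f : 𝓢(E3, ℝ)) :
    sobolevEnergy 2 (complexify f) ≤ ∑ i, eLpNorm (pd i f) 2 volume ^ (2 : ℝ) := by
  refine (sobolevEnergy_two_le_sum_lineDerivOp (EuclideanSpace.basisFun (Fin 3) ℝ) _).trans_eq ?_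
  simp only [EuclideanSpace.basisFun_apply, lineDerivOp_complexify, enorm_complexify_apply,
    ← coe_schwartzPd, eLpNorm_two_sq, schwartzPd]

/-- The vorticity `curl u` with components bundled as Schwartz functions. In the cyclic indexing
of `Fin 3` its `k`-th component is `∂_{k+1} u^{k+2} - ∂_{k+2} u^{k+1}`. -/
def vorticity (u : Fin 3 → 𝓢(E3, ℝ)) (k : Fin 3) : 𝓢(E3, ℝ) :=
  schwartzPd (k + 1) (u (k + 2)) - schwartzPd (k + 2) (u (k + 1))

theorem coe_vorticity (u : Fin 3 → 𝓢(E3, ℝ)) (k : Fin 3) : ⇑(vorticity u k) = curlS u k := by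
  ext x
  rw [vorticity, sub_apply, coe_schwartzPd, coe_schwartzPd]
  fin_cases k <;> rfl

theorem fourier_complexify_vorticity (u : Fin 3 → 𝓢(E3, ℝ)) (k : Fin 3) (ξ : E3) :
    𝓕 (complexify (vorticity u k)) ξ =
      2 * π * Complex.I * (ξ (k + 1) * 𝓕 (complexify (u (k + 2))) ξ -
        ξ (k + 2) * 𝓕 (complexify (u (k + 1))) ξ) := by
  rw [vorticity, map_sub, schwartz_fourier_sub, sub_apply, fourier_complexify_schwartzPd,
    fourier_complexify_schwartzPd]
  ring

theorem sum_mul_fourier_complexify_eq_zero {u : Fin 3 → 𝓢(E3, ℝ)}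
    (hu : ∀ x, ∑ i : Fin 3, pd i (⇑(u i)) x = 0) (ξ : E3) :
    ∑ i : Fin 3, (ξ i : ℂ) * 𝓕 (complexify (u i)) ξ = 0 := by
  have hdiv : ∑ i, schwartzPd i (u i) = 0 := by
    ext x
    rw [sum_apply, zero_apply, ← hu x]
    exact Finset.sum_congr rfl fun i _ => congrFun (coe_schwartzPd i (u i)) x
  have hfourier : ∑ i, 𝓕 (complexify (schwartzPd i (u i))) ξ = 0 := by
    rw [← sum_apply, ← FourierTransform.fourier_sum, ← map_sum, hdiv, map_zero,
      FourierTransform.fourier_zero, zero_apply]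
  simp only [fourier_complexify_schwartzPd, mul_assoc, ← Finset.mul_sum] at hfourier
  simpa [Real.pi_ne_zero] using hfourier

/-- The symbols expressing `∂ᵢ u^k` through `ω^{k+1}` and `ω^{k+2}`. -/
def biotSavartSymbol (i k : Fin 3) : Fin 2 → E3 → ℂ :=
  ![rieszSymbol i (k + 2), -rieszSymbol i (k + 1)]

theorem norm_biotSavartSymbol_le_one (i k : Fin 3) (l : Fin 2) (ξ : E3) :
    ‖biotSavartSymbol i k l ξ‖ ≤ 1 := by
  fin_cases l
  · exact norm_rieszSymbol_le_one i (k + 2) ξ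
  · exact (norm_neg _).trans_le (norm_rieszSymbol_le_one i (k + 1) ξ)

theorem biotSavartSymbol_smul (i k : Fin 3) (l : Fin 2) {t : ℝ} (ht : t ≠ 0) (ξ : E3) :
    biotSavartSymbol i k l (t • ξ) = biotSavartSymbol i k l ξ := by
  fin_cases l
  · exact rieszSymbol_smul i (k + 2) ht ξ
  · exact congrArg Neg.neg (rieszSymbol_smul i (k + 1) ht ξ)

theorem contDiffOn_biotSavartSymbol (i k : Fin 3) (l : Fin 2) :
    ContDiffOn ℝ ((⊤ : ℕ∞) : WithTop ℕ∞) (biotSavartSymbol i k l) {0}ᶜ := by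
  fin_cases l
  · exact contDiffOn_rieszSymbol i (k + 2)
  · exact (contDiffOn_rieszSymbol i (k + 1)).neg

theorem fourier_complexify_schwartzPd_eq_sum_biotSavartSymbol_mul {u : Fin 3 → 𝓢(E3, ℝ)}
    (hu : ∀ x, ∑ i : Fin 3, pd i (⇑(u i)) x = 0) (i k : Fin 3) (ξ : E3) :
    𝓕 (complexify (schwartzPd i (u k))) ξ = ∑ l, biotSavartSymbol i k l ξ *
      𝓕 (![complexify (vorticity u (k + 1)), complexify (vorticity u (k + 2))] l) ξ := by
  simp only [Fin.sum_univ_two, biotSavartSymbol, Matrix.cons_val_zero, Matrix.cons_val_one,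
    Pi.neg_apply, fourier_complexify_vorticity, fourier_complexify_schwartzPd, rieszSymbol]
  rcases eq_or_ne ξ 0 with rfl | hξ
  · simp
  have hnorm : (‖ξ‖ : ℂ) ^ 2 ≠ 0 := by simpa using hξ
  have hnorm_sq : (‖ξ‖ : ℂ) ^ 2 = (ξ 0 : ℂ) ^ 2 + (ξ 1 : ℂ) ^ 2 + (ξ 2 : ℂ) ^ 2 := by
    have h := EuclideanSpace.norm_sq_eq ξ
    simp only [Fin.sum_univ_three, Real.norm_eq_abs, sq_abs] at h
    exact_mod_cast h
  have hdiv := sum_mul_fourier_complexify_eq_zero hu ξ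
  rw [Fin.sum_univ_three] at hdiv
  push_cast
  rw [← neg_div, div_mul_eq_mul_div, div_mul_eq_mul_div, ← add_div, eq_div_iff hnorm, hnorm_sq]
  fin_cases k
  · simp only [Fin.zero_eta, Fin.isValue, Fin.reduceAdd, zero_add]
    linear_combination 2 * π * Complex.I * (ξ i : ℂ) * (ξ 0 : ℂ) * hdiv
  · simp only [Fin.mk_one, Fin.isValue, Fin.reduceAdd]
    linear_combination 2 * π * Complex.I * (ξ i : ℂ) * (ξ 1 : ℂ) * hdiv
  · simp only [Fin.reduceFinMk, Fin.isValue, Fin.reduceAdd]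
    linear_combination 2 * π * Complex.I * (ξ i : ℂ) * (ξ 2 : ℂ) * hdiv

end BiotSavart

section VortexStretching

variable {χ : E3 → ℝ} {α : ℝ}

theorem besovNorm_complexify_vorticity_le (χ : E3 → ℝ) (s : ℝ) (u : Fin 3 → 𝓢(E3, ℝ))
    (k : Fin 3) :
    besovNorm χ s ⊤ ⊤ (complexify (vorticity u k)) ≤ vecBesovInf χ s (curlS u) := by
  have hcoe : ⇑(complexify (vorticity u k)) = fun x => ((curlS u k x : ℝ) : ℂ) := by
    ext x
    rw [complexify_apply, coe_vorticity]
  rw [hcoe, besovNorm_top_top]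
  exact le_iSup (fun k => ⨆ j : ℤ, (2 : ℝ≥0∞) ^ ((j : ℝ) * s) *
    eLpNorm (Dproj χ j fun x => ((curlS u k x : ℝ) : ℂ)) ⊤ volume) k

theorem sobolevEnergy_complexify_vorticity_le (hα : 0 ≤ α) (hα2 : α ≤ 2)
    (u : Fin 3 → 𝓢(E3, ℝ)) (k : Fin 3) :
    sobolevEnergy α (complexify (vorticity u k)) ≤
      gradL2 (curlS u) ^ α * vecL2 (curlS u) ^ (2 - α) := by
  have hgrad : sobolevEnergy 2 (complexify (vorticity u k)) ≤
      ∑ i, ∑ j, eLpNorm (pd i (curlS u j)) 2 volume ^ (2 : ℝ) := by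
    refine (sobolevEnergy_two_complexify_le _).trans (Finset.sum_le_sum fun i _ => ?_)
    rw [coe_vorticity]
    exact Finset.single_le_sum (f := fun j => eLpNorm (pd i (curlS u j)) 2 volume ^ (2 : ℝ))
      (fun _ _ => zero_le) (Finset.mem_univ k)
  have hL2 : sobolevEnergy 0 (complexify (vorticity u k)) ≤
      ∑ j, eLpNorm (curlS u j) 2 volume ^ (2 : ℝ) := by
    rw [sobolevEnergy_zero_complexify, coe_vorticity]
    exact Finset.single_le_sum (f := fun j => eLpNorm (curlS u j) 2 volume ^ (2 : ℝ))
      (fun _ _ => zero_le) (Finset.mem_univ k)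
  have hinterpolation := sobolevEnergy_add_le_rpow_mul_rpow zero_le_two le_rfl
    (p := α / 2) (q := 1 - α / 2) (by linarith) (by linarith) (by ring)
    (complexify (vorticity u k))
  rw [mul_zero, add_zero, div_mul_cancel₀ α two_ne_zero] at hinterpolation
  refine hinterpolation.trans ?_
  rw [gradL2, vecL2, ← ENNReal.rpow_mul, ← ENNReal.rpow_mul,
    show 1 / 2 * α = α / 2 by ring, show 1 / 2 * (2 - α) = 1 - α / 2 by ring]
  exact mul_le_mul' (ENNReal.rpow_le_rpow hgrad (by linarith))
    (ENNReal.rpow_le_rpow hL2 (by linarith))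

theorem exists_lintegral_enorm_vorticity_cube_le (hχ : IsLPCutoff χ) (hα : 0 < α) (hα2 : α ≤ 2) :
    ∃ C ≠ ∞, ∀ (u : Fin 3 → 𝓢(E3, ℝ)) (k : Fin 3), ∫⁻ x, ‖vorticity u k x‖ₑ ^ 3 ≤
      C * (gradL2 (curlS u) ^ α * vecL2 (curlS u) ^ (2 - α) * vecBesovInf χ (-α) (curlS u)) := by
  obtain ⟨C, hC, hcube⟩ := exists_lintegral_enorm_cube_le_besovNorm_mul_sobolevEnergy hχ hα
  refine ⟨C, hC, fun u k => ?_⟩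
  simp only [← enorm_complexify_apply]
  refine (hcube _).trans ?_
  rw [mul_comm (besovNorm _ _ _ _ _)]
  gcongr
  · exact sobolevEnergy_complexify_vorticity_le hα.le hα2 u k
  · exact besovNorm_complexify_vorticity_le χ (-α) u k

theorem exists_besovNorm_complexify_schwartzPd_le (hχ : IsLPCutoff χ) :
    ∃ A ≠ ∞, ∀ (s : ℝ) (u : Fin 3 → 𝓢(E3, ℝ)), (∀ x, ∑ i : Fin 3, pd i (⇑(u i)) x = 0) →
      ∀ i k, besovNorm χ s ⊤ ⊤ (complexify (schwartzPd i (u k))) ≤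
        A * vecBesovInf χ s (curlS u) := by
  choose A hA hbound using fun i k => exists_besovNorm_top_top_le_of_homogeneous hχ
    (contDiffOn_biotSavartSymbol i k) fun l t ht => biotSavartSymbol_smul i k l ht.ne'
  refine ⟨∑ i, ∑ k, A i k, ENNReal.sum_ne_top.2 fun i _ => ENNReal.sum_ne_top.2 fun k _ => hA i k,
    fun s u hu i k => ?_⟩
  refine (hbound i k s _ _ (fourier_complexify_schwartzPd_eq_sum_biotSavartSymbol_mul hu i k)).trans
    (mul_le_mul' ?_ (iSup_le fun l => ?_))
  · exact (Finset.single_le_sum (f := A i) (fun _ _ => zero_le) (Finset.mem_univ k)).trans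
      (Finset.single_le_sum (f := fun i => ∑ k, A i k) (fun _ _ => zero_le) (Finset.mem_univ i))
  · fin_cases l
    · exact besovNorm_complexify_vorticity_le χ s u (k + 1)
    · exact besovNorm_complexify_vorticity_le χ s u (k + 2)

theorem sobolevEnergy_complexify_schwartzPd_le (hα : 0 ≤ α) (hα2 : α ≤ 2)
    {u : Fin 3 → 𝓢(E3, ℝ)} (hu : ∀ x, ∑ i : Fin 3, pd i (⇑(u i)) x = 0) (i k : Fin 3) :
    sobolevEnergy α (complexify (schwartzPd i (u k))) ≤
      4 * (gradL2 (curlS u) ^ α * vecL2 (curlS u) ^ (2 - α)) := by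
  refine (sobolevEnergy_le_of_fourier_eq_sum α (norm_biotSavartSymbol_le_one i k)
    (fourier_complexify_schwartzPd_eq_sum_biotSavartSymbol_mul hu i k)).trans ?_
  rw [Fintype.card_fin, Fin.sum_univ_two]
  refine (mul_le_mul_right (add_le_add
    (sobolevEnergy_complexify_vorticity_le hα hα2 u (k + 1))
    (sobolevEnergy_complexify_vorticity_le hα hα2 u (k + 2))) _).trans_eq ?_
  push_cast
  ring

theorem exists_lintegral_enorm_schwartzPd_cube_le (hχ : IsLPCutoff χ) (hα : 0 < α)
    (hα2 : α ≤ 2) :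
    ∃ C ≠ ∞, ∀ u : Fin 3 → 𝓢(E3, ℝ), (∀ x, ∑ i : Fin 3, pd i (⇑(u i)) x = 0) →
      ∀ i k, ∫⁻ x, ‖schwartzPd i (u k) x‖ₑ ^ 3 ≤
        C * (gradL2 (curlS u) ^ α * vecL2 (curlS u) ^ (2 - α) *
          vecBesovInf χ (-α) (curlS u)) := by
  obtain ⟨C, hC, hcube⟩ := exists_lintegral_enorm_cube_le_besovNorm_mul_sobolevEnergy hχ hα
  obtain ⟨A, hA, hbesov⟩ := exists_besovNorm_complexify_schwartzPd_le hχ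
  refine ⟨C * (4 * A), by finiteness, fun u hu i k => ?_⟩
  simp only [← enorm_complexify_apply]
  refine ((hcube _).trans (mul_le_mul_right (mul_le_mul' (hbesov (-α) u hu i k)
    (sobolevEnergy_complexify_schwartzPd_le hα.le hα2 hu i k)) C)).trans_eq ?_
  ring

theorem ofReal_abs_vortexStretch_le (u : Fin 3 → 𝓢(E3, ℝ)) {Q : ℝ≥0∞}
    (hω : ∀ k, ∫⁻ x, ‖vorticity u k x‖ₑ ^ 3 ≤ Q)
    (hgrad : ∀ i k, ∫⁻ x, ‖schwartzPd i (u k) x‖ₑ ^ 3 ≤ Q) :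
    ENNReal.ofReal |vortexStretch u| ≤ 9 * Q := by
  have hmeas (f : 𝓢(E3, ℝ)) : Measurable fun x => ‖f x‖ₑ := f.continuous.enorm.measurable
  have hholder (j i : Fin 3) :
      ∫⁻ x, ‖vorticity u i x‖ₑ * ‖schwartzPd i (u j) x‖ₑ * ‖vorticity u j x‖ₑ ≤ Q := by
    have h := lintegral_prod_le_of_forall_lintegral_pow_card_le (μ := volume) (Q := Q)
      (f := fun l x => ‖![vorticity u i, schwartzPd i (u j), vorticity u j] l x‖ₑ)
      (Finset.univ_nonempty (α := Fin 3)) (fun l _ => (hmeas _).aemeasurable) fun l _ => by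
        rw [Finset.card_fin]
        fin_cases l
        exacts [hω i, hgrad i j, hω j]
    rwa [funext fun x => Fin.prod_univ_three _] at h
  rw [← Real.norm_eq_abs, ofReal_norm, vortexStretch]
  calc _ ≤ ∫⁻ x, ∑ j, ∑ i,
        ‖vorticity u i x‖ₑ * ‖schwartzPd i (u j) x‖ₑ * ‖vorticity u j x‖ₑ := by
        refine (enorm_integral_le_lintegral_enorm _).trans (lintegral_mono fun x => ?_)
        refine (enorm_sum_le _ _).trans (Finset.sum_le_sum fun j _ => ?_)
        rw [Finset.sum_mul]
        refine (enorm_sum_le _ _).trans_eq (Finset.sum_congr rfl fun i _ => ?_)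
        rw [coe_vorticity, coe_vorticity, coe_schwartzPd, enorm_mul, enorm_mul]
    _ = ∑ j, ∑ i, ∫⁻ x, ‖vorticity u i x‖ₑ * ‖schwartzPd i (u j) x‖ₑ * ‖vorticity u j x‖ₑ := by
        have hprod (j i : Fin 3) : Measurable fun x =>
            ‖vorticity u i x‖ₑ * ‖schwartzPd i (u j) x‖ₑ * ‖vorticity u j x‖ₑ :=
          ((hmeas _).mul (hmeas _)).mul (hmeas _)
        rw [lintegral_finsetSum _ fun j _ => Finset.measurable_fun_sum _ fun i _ => hprod j i]
        exact Finset.sum_congr rfl fun j _ => lintegral_finsetSum _ fun i _ => hprod j i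
    _ ≤ ∑ _j : Fin 3, ∑ _i : Fin 3, Q := by
        gcongr with j _ i
        exact hholder j i
    _ = 9 * Q := by
        simp only [Finset.sum_const, Finset.card_fin, nsmul_eq_mul, ← mul_assoc]
        norm_num

theorem vortex_stretch_interpolation_estimate_general
    (χ : E3 → ℝ) (hχ : IsLPCutoff χ) (α : ℝ) (hα : 0 < α) (hα2 : α ≤ 2) :
    ∃ C : ℝ≥0∞, 0 < C ∧ C < ∞ ∧
      ∀ u : Fin 3 → 𝓢(E3, ℝ), (∀ x, ∑ i : Fin 3, pd i (⇑(u i)) x = 0) →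
        ENNReal.ofReal |vortexStretch u| ≤
          C * (gradL2 (curlS u) ^ α * vecL2 (curlS u) ^ (2 - α)
                * vecBesovInf χ (-α) (curlS u)) := by
  obtain ⟨C, hC, hω⟩ := exists_lintegral_enorm_vorticity_cube_le hχ hα hα2
  obtain ⟨D, hD, hgrad⟩ := exists_lintegral_enorm_schwartzPd_cube_le hχ hα hα2
  refine ⟨9 * (C + D) + 1, by positivity, by finiteness, fun u hu => ?_⟩
  refine (ofReal_abs_vortexStretch_le u (fun k => (hω u k).trans (mul_le_mul_left le_self_add _))
    fun i k => (hgrad u hu i k).trans (mul_le_mul_left le_add_self _)).trans ?_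
  rw [← mul_assoc]
  exact mul_le_mul_left le_self_add _

end VortexStretching

/-- **Estimate (3.10)**: for `0 < α < 1` there is a constant `C > 0` such that for
every divergence-free Schwartz vector field `u` on `ℝ³` with vorticity `ω = curl u`,
`|∫ ((ω·∇)u)·ω dx| ≤ C (‖∇ω‖_{L²}^{1+α} ‖ω‖_{L²}^{1-α} ‖ω‖_{Ḃ^{-1-α}_{∞,∞}}
+ ‖∇ω‖_{L²}^{α} ‖ω‖_{L²}^{2-α} ‖ω‖_{Ḃ^{-α}_{∞,∞}})`. -/
theorem vortex_stretch_interpolation_estimate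
    (χ : E3 → ℝ) (hχ : IsLPCutoff χ) (α : ℝ) (hα : 0 < α) (hα1 : α < 1) :
    ∃ C : ℝ≥0∞, 0 < C ∧ C < ∞ ∧
      ∀ u : Fin 3 → 𝓢(E3, ℝ), (∀ x, ∑ i : Fin 3, pd i (⇑(u i)) x = 0) →
        ENNReal.ofReal |vortexStretch u| ≤
          C * (gradL2 (curlS u) ^ (1 + α) * vecL2 (curlS u) ^ (1 - α)
                * vecBesovInf χ (-1 - α) (curlS u)
            + gradL2 (curlS u) ^ α * vecL2 (curlS u) ^ (2 - α)
                * vecBesovInf χ (-α) (curlS u)) := by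
  obtain ⟨C, hpos, hfinite, hC⟩ :=
    vortex_stretch_interpolation_estimate_general χ hχ α hα (by linarith)
  exact ⟨C, hpos, hfinite, fun u hu => (hC u hu).trans (mul_le_mul_right le_add_self C)⟩
end
end
end

section
/- Let (u, p) be a strong solution of the Navier–Stokes equations on [0,T) × ℝ³ (smooth, divergence-free, with u(t,·) and p(t,·) Schwartz in x, locally uniformly in t). Then the energy identity holds: for every t ∈ [0,T), ‖u(t,·)‖_{L²}² + 2 ∫₀ᵗ ‖∇u(τ,·)‖_{L²}² dτ = ‖u(0,·)‖_{L²}². -/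
open MeasureTheory Real Complex Filter Function
open scoped ENNReal FourierTransform SchwartzMap

noncomputable section

noncomputable section

/-- A **strong solution of the Navier–Stokes equations** on `[0,T) × ℝ³`: the velocity
`u` and the pressure `p` are smooth on `[0,T) × ℝ³` and Schwartz in the space variable
with all Schwartz seminorms locally bounded in time, `u(t,·)` is divergence-free, and
`∂ₜu - Δu + (u·∇)u + ∇p = 0` on `(0,T) × ℝ³`. -/
structure IsStrongSolution (T : ℝ) (u : ℝ → Fin 3 → 𝓢(E3, ℝ)) (p : ℝ → 𝓢(E3, ℝ)) :
    Prop where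
  smooth_u : ∀ i : Fin 3, ContDiffOn ℝ ((⊤ : ℕ∞) : WithTop ℕ∞)
    (fun tx : ℝ × E3 => u tx.1 i tx.2) (Set.Ico 0 T ×ˢ Set.univ)
  smooth_p : ContDiffOn ℝ ((⊤ : ℕ∞) : WithTop ℕ∞)
    (fun tx : ℝ × E3 => p tx.1 tx.2) (Set.Ico 0 T ×ˢ Set.univ)
  locBdd_u : ∀ k l : ℕ, ∀ t ∈ Set.Ico (0 : ℝ) T, ∃ ε > 0, ∃ M : ℝ,
    ∀ s ∈ Set.Ico (0 : ℝ) T, |s - t| < ε → ∀ i, SchwartzMap.seminorm ℝ k l (u s i) ≤ M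
  locBdd_p : ∀ k l : ℕ, ∀ t ∈ Set.Ico (0 : ℝ) T, ∃ ε > 0, ∃ M : ℝ,
    ∀ s ∈ Set.Ico (0 : ℝ) T, |s - t| < ε → SchwartzMap.seminorm ℝ k l (p s) ≤ M
  divFree : ∀ t ∈ Set.Ico (0 : ℝ) T, ∀ x, ∑ i : Fin 3, pd i (⇑(u t i)) x = 0
  eqn : ∀ t ∈ Set.Ioo (0 : ℝ) T, ∀ x, ∀ j : Fin 3,
    deriv (fun s => u s j x) t - (∑ i : Fin 3, pd i (pd i (⇑(u t j))) x)
      + (∑ i : Fin 3, u t i x * pd i (⇑(u t j)) x) + pd j (⇑(p t)) x = 0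

/-- The space-time integral `∫₀ᵀ (‖ω(τ)‖_{Ḃ^{-α}_{∞,∞}}^{2/(2-α)} +
‖ω(τ)‖_{Ḃ^{-1-α}_{∞,∞}}^{2/(1-α)}) dτ` of the vorticity `ω = curl u`. -/
def vortBesovIntegral (χ : E3 → ℝ) (α T : ℝ) (u : ℝ → Fin 3 → 𝓢(E3, ℝ)) : ℝ≥0∞ :=
  ∫⁻ τ in Set.Ioo (0 : ℝ) T,
    vecBesovInf χ (-α) (curlS (u τ)) ^ (2 / (2 - α))
      + vecBesovInf χ (-1 - α) (curlS (u τ)) ^ (2 / (1 - α))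

/-!
On divergence-free Schwartz fields integration by parts turns transport and pressure into zero and
diffusion into minus the squared gradient, so `∫ |u|²` has time derivative `-2 ∫ |∇u|²`. Families
of Schwartz functions with locally bounded seminorms are stable under derivatives and products and
have a common integrable majorant, which justifies differentiating under the integral sign on
`(0,T)` and gives continuity of the energy down to `t = 0`.
-/

section SchwartzBounds

open scoped LineDeriv Topology

variable {α : Type*} {D E F G : Type*} [NormedAddCommGroup D] [NormedSpace ℝ D]
  [NormedAddCommGroup E] [NormedSpace ℝ E] [NormedAddCommGroup F] [NormedSpace ℝ F]
  [NormedAddCommGroup G] [NormedSpace ℝ G]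

lemma seminorm_pairing_le (B : E →L[ℝ] F →L[ℝ] G) (f : 𝓢(D, E)) (g : 𝓢(D, F)) (k n : ℕ) :
    SchwartzMap.seminorm ℝ k n (SchwartzMap.pairing B f g) ≤
      ‖B‖ * ∑ i ∈ Finset.range (n + 1), n.choose i *
        SchwartzMap.seminorm ℝ k i f * SchwartzMap.seminorm ℝ 0 (n - i) g := by
  refine SchwartzMap.seminorm_le_bound ℝ k n _ (by positivity) fun x => ?_
  calc ‖x‖ ^ k * ‖iteratedFDeriv ℝ n (SchwartzMap.pairing B f g) x‖
      ≤ ‖x‖ ^ k * (‖B‖ * ∑ i ∈ Finset.range (n + 1),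
          n.choose i * ‖iteratedFDeriv ℝ i f x‖ * ‖iteratedFDeriv ℝ (n - i) g x‖) := by
        gcongr
        exact B.norm_iteratedFDeriv_le_of_bilinear (f.smooth n) (g.smooth n) x le_rfl
    _ = ‖B‖ * ∑ i ∈ Finset.range (n + 1), n.choose i *
          (‖x‖ ^ k * ‖iteratedFDeriv ℝ i f x‖) * ‖iteratedFDeriv ℝ (n - i) g x‖ := by
        simp only [Finset.mul_sum]
        exact Finset.sum_congr rfl fun i _ => by ring
    _ ≤ _ := by
        gcongr with i
        · exact SchwartzMap.le_seminorm ℝ k i f x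
        · exact SchwartzMap.norm_iteratedFDeriv_le_seminorm ℝ g (n - i) x

lemma lineDerivOp_pairing (B : E →L[ℝ] F →L[ℝ] G) (f : 𝓢(D, E)) (g : 𝓢(D, F)) (v : D) :
    ∂_{v} (SchwartzMap.pairing B f g) =
      SchwartzMap.pairing B (∂_{v} f) g + SchwartzMap.pairing B f (∂_{v} g) := by
  ext x
  have h := B.hasFDerivAt_of_bilinear (f.hasFDerivAt x) (g.hasFDerivAt x)
  simp [SchwartzMap.lineDerivOp_apply_eq_fderiv, SchwartzMap.pairing_apply, h.fderiv, add_comm]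

/-- A family of Schwartz functions is bounded along a filter if each Schwartz seminorm is
eventually bounded; the set on which the bound holds may depend on the seminorm. -/
def SchwartzBoundedAlong (l : Filter α) (f : α → 𝓢(D, E)) : Prop :=
  ∀ k n : ℕ, (fun a => SchwartzMap.seminorm ℝ k n (f a)) =O[l] fun _ => (1 : ℝ)

namespace SchwartzBoundedAlong

variable {l : Filter α} {f : α → 𝓢(D, E)}

lemma of_dist_lt {α : Type*} [PseudoMetricSpace α] {S : Set α} {a : α} {f : α → 𝓢(D, E)}
    (h : ∀ k n : ℕ, ∃ ε > 0, ∃ M : ℝ,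
      ∀ b ∈ S, dist b a < ε → SchwartzMap.seminorm ℝ k n (f b) ≤ M) :
    SchwartzBoundedAlong (𝓝[S] a) f := fun k n => by
  obtain ⟨ε, hε, M, hM⟩ := h k n
  refine .of_bound M ?_
  filter_upwards [self_mem_nhdsWithin, mem_nhdsWithin_of_mem_nhds (Metric.ball_mem_nhds a hε)]
    with b hb hba
  simpa [abs_of_nonneg (apply_nonneg (SchwartzMap.seminorm ℝ k n) (f b))] using hM b hb hba

lemma add {g : α → 𝓢(D, E)} (hf : SchwartzBoundedAlong l f) (hg : SchwartzBoundedAlong l g) :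
    SchwartzBoundedAlong l fun a => f a + g a := fun k n =>
  .trans (.of_norm_le fun a => by
    rw [Real.norm_of_nonneg (apply_nonneg _ _)]
    exact map_add_le_add _ _ _) ((hf k n).add (hg k n))

lemma clm (hf : SchwartzBoundedAlong l f) (A : 𝓢(D, E) →L[ℝ] 𝓢(F, G)) :
    SchwartzBoundedAlong l fun a => A (f a) := fun k n => by
  have hcont : Continuous ((SchwartzMap.seminorm ℝ k n).comp A.toLinearMap) :=
    ((schwartz_withSeminorms ℝ F G).continuous_seminorm (k, n)).comp A.continuous
  obtain ⟨s, C, -, hC⟩ := Seminorm.bound_of_continuous (schwartz_withSeminorms ℝ D E) _ hcont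
  have hsum : (fun a => C * ∑ i ∈ s, SchwartzMap.seminorm ℝ i.1 i.2 (f a)) =O[l]
      fun _ => (1 : ℝ) :=
    .const_mul_left (.fun_sum fun i _ => hf i.1 i.2) (C : ℝ)
  refine .trans (.of_norm_le fun a => ?_) hsum
  rw [Real.norm_of_nonneg (apply_nonneg _ _)]
  calc SchwartzMap.seminorm ℝ k n (A (f a))
      ≤ C * s.sup (schwartzSeminormFamily ℝ D E) (f a) := hC (f a)
    _ ≤ C * (∑ i ∈ s, schwartzSeminormFamily ℝ D E i) (f a) := by
        gcongr
        exact Seminorm.finset_sup_le_sum _ s (f a)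
    _ = C * ∑ i ∈ s, SchwartzMap.seminorm ℝ i.1 i.2 (f a) := by
        rw [sum_apply]
        rfl

lemma const_smul (hf : SchwartzBoundedAlong l f) (c : ℝ) :
    SchwartzBoundedAlong l fun a => c • f a :=
  hf.clm (c • ContinuousLinearMap.id ℝ 𝓢(D, E))

lemma sub {g : α → 𝓢(D, E)} (hf : SchwartzBoundedAlong l f) (hg : SchwartzBoundedAlong l g) :
    SchwartzBoundedAlong l fun a => f a - g a := by
  simpa only [sub_eq_add_neg, neg_one_smul] using hf.add (hg.const_smul (-1))

lemma lineDerivOp (hf : SchwartzBoundedAlong l f) (v : D) :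
    SchwartzBoundedAlong l fun a => ∂_{v} (f a) :=
  hf.clm (LineDeriv.lineDerivOpCLM ℝ 𝓢(D, E) v)

lemma sum {ι : Type*} {s : Finset ι} {f : ι → α → 𝓢(D, E)}
    (hf : ∀ i ∈ s, SchwartzBoundedAlong l (f i)) :
    SchwartzBoundedAlong l fun a => ∑ i ∈ s, f i a := by
  have hzero : SchwartzBoundedAlong l (0 : α → 𝓢(D, E)) := fun k n => by
    simpa only [Pi.zero_apply, map_zero] using Asymptotics.isBigO_zero (fun _ : α => (1 : ℝ)) l
  have h := Finset.sum_induction f (SchwartzBoundedAlong l) (fun _ _ => add) hzero hf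
  simpa only [← Finset.sum_apply] using h

lemma pairing {g : α → 𝓢(D, F)} (hf : SchwartzBoundedAlong l f)
    (hg : SchwartzBoundedAlong l g) (B : E →L[ℝ] F →L[ℝ] G) :
    SchwartzBoundedAlong l fun a => SchwartzMap.pairing B (f a) (g a) := fun k n => by
  have h : (fun a => ‖B‖ * ∑ i ∈ Finset.range (n + 1), n.choose i *
      SchwartzMap.seminorm ℝ k i (f a) * SchwartzMap.seminorm ℝ 0 (n - i) (g a))
        =O[l] fun _ => (1 : ℝ) :=
    .const_mul_left (.fun_sum fun i _ => by
      simpa only [mul_one] using ((hf k i).const_mul_left _).mul (hg 0 (n - i))) _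
  refine .trans (.of_norm_le fun a => ?_) h
  rw [Real.norm_of_nonneg (apply_nonneg _ _)]
  exact seminorm_pairing_le B (f a) (g a) k n

lemma exists_norm_le (hf : SchwartzBoundedAlong l f) (m : ℕ) :
    ∃ C : ℝ, ∀ᶠ a in l, ∀ x, ‖f a x‖ ≤ C * (1 + ‖x‖) ^ (-(m : ℝ)) := by
  obtain ⟨M₀, h₀⟩ := (hf 0 0).bound
  obtain ⟨M, h⟩ := (hf m 0).bound
  refine ⟨2 ^ m * (M₀ + M), ?_⟩
  filter_upwards [h₀, h] with a ha₀ ha x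
  simp only [norm_one, mul_one] at ha₀ ha
  have hsup : ‖f a x‖ ≤ M₀ :=
    (SchwartzMap.norm_le_seminorm ℝ (f a) x).trans ((le_abs_self _).trans ha₀)
  have hdecay : ‖x‖ ^ m * ‖f a x‖ ≤ M :=
    (SchwartzMap.norm_pow_mul_le_seminorm ℝ (f a) m x).trans ((le_abs_self _).trans ha)
  simpa using pow_mul_le_of_le_of_pow_mul_le (k := 0) (norm_nonneg x) (norm_nonneg (f a x)) hsup
    (by simpa using hdecay)

variable [MeasurableSpace D] [BorelSpace D] [SecondCountableTopology D]
  {μ : Measure D} [μ.HasTemperateGrowth]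

lemma tendsto_integral [l.IsCountablyGenerated] (hf : SchwartzBoundedAlong l f) {g : D → E}
    (hlim : ∀ x, Tendsto (fun a => f a x) l (𝓝 (g x))) :
    Tendsto (fun a => ∫ x, f a x ∂μ) l (𝓝 (∫ x, g x ∂μ)) := by
  obtain ⟨C, hC⟩ := hf.exists_norm_le μ.integrablePower
  exact tendsto_integral_filter_of_dominated_convergence _
    (.of_forall fun a => (f a).integrable.aestronglyMeasurable)
    (hC.mono fun a ha => .of_forall ha)
    ((Measure.integrable_pow_neg_integrablePower μ).const_mul C) (.of_forall hlim)

lemma hasDerivAt_integral {f f' : ℝ → 𝓢(D, E)} {t : ℝ} (hf' : SchwartzBoundedAlong (𝓝 t) f')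
    (hderiv : ∀ᶠ s in 𝓝 t, ∀ x, HasDerivAt (fun r => f r x) (f' s x) s) :
    HasDerivAt (fun s => ∫ x, f s x ∂μ) (∫ x, f' t x ∂μ) t := by
  obtain ⟨C, hC⟩ := hf'.exists_norm_le μ.integrablePower
  exact (hasDerivAt_integral_of_dominated_loc_of_deriv_le (hC.and hderiv)
    (.of_forall fun s => (f s).integrable.aestronglyMeasurable) (f t).integrable
    (f' t).integrable.aestronglyMeasurable (.of_forall fun x s hs => hs.1 x)
    ((Measure.integrable_pow_neg_integrablePower μ).const_mul C)
    (.of_forall fun x s hs => hs.2 x)).2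

end SchwartzBoundedAlong

end SchwartzBounds

section EnergyBalance

open scoped LineDeriv

variable {ι E : Type*} [NormedAddCommGroup E] [NormedSpace ℝ E]

/-- The pointwise product of real Schwartz functions, as a bilinear map. -/
def schwartzMul : 𝓢(E, ℝ) →ₗ[ℝ] 𝓢(E, ℝ) →L[ℝ] 𝓢(E, ℝ) :=
  SchwartzMap.pairing (ContinuousLinearMap.mul ℝ ℝ)

lemma schwartzMul_apply (f g : 𝓢(E, ℝ)) (x : E) : schwartzMul f g x = f x * g x := rfl

lemma schwartzMul_self_apply (f : 𝓢(E, ℝ)) (x : E) : schwartzMul f f x = f x ^ 2 :=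
  (sq (f x)).symm

lemma schwartzMul_comm (f g : 𝓢(E, ℝ)) : schwartzMul f g = schwartzMul g f :=
  SchwartzMap.ext fun _ => mul_comm _ _

lemma lineDerivOp_schwartzMul_self (f : 𝓢(E, ℝ)) (v : E) :
    ∂_{v} (schwartzMul f f) = (2 : ℝ) • schwartzMul f (∂_{v} f) := by
  rw [two_smul]
  nth_rw 2 [schwartzMul_comm]
  exact lineDerivOp_pairing _ f f v

lemma SchwartzBoundedAlong.schwartzMul {α : Type*} {l : Filter α} {f g : α → 𝓢(E, ℝ)}
    (hf : SchwartzBoundedAlong l f) (hg : SchwartzBoundedAlong l g) :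
    SchwartzBoundedAlong l fun a => schwartzMul (f a) (g a) :=
  hf.pairing hg (ContinuousLinearMap.mul ℝ ℝ)

variable [Fintype ι]

/-- The divergence `∑ᵢ ∂ᵢvᵢ` of a field with components `v i`, where `∂ᵢ` is the derivative in
the direction `e i`. -/
def divergence (e : ι → E) (v : ι → 𝓢(E, ℝ)) : 𝓢(E, ℝ) :=
  ∑ i, ∂_{e i} (v i)

/-- The derivative `(v · ∇) f = ∑ᵢ vᵢ ∂ᵢf` of `f` along `v`. -/
def advection (e : ι → E) (v : ι → 𝓢(E, ℝ)) (f : 𝓢(E, ℝ)) : 𝓢(E, ℝ) :=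
  ∑ i, schwartzMul (v i) (∂_{e i} f)

/-- The `j`-th component of the right-hand side of the Navier–Stokes equations
`∂ₜv = Δv - (v · ∇) v - ∇q`. -/
def acceleration (e : ι → E) (v : ι → 𝓢(E, ℝ)) (q : 𝓢(E, ℝ)) (j : ι) : 𝓢(E, ℝ) :=
  ∑ i, ∂_{e i} (∂_{e i} (v j)) - advection e v (v j) - ∂_{e j} q

lemma SchwartzBoundedAlong.acceleration {α : Type*} {l : Filter α} {e : ι → E}
    {v : α → ι → 𝓢(E, ℝ)} {q : α → 𝓢(E, ℝ)} (hv : ∀ j, SchwartzBoundedAlong l fun a => v a j)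
    (hq : SchwartzBoundedAlong l q) (j : ι) :
    SchwartzBoundedAlong l fun a => acceleration e (v a) (q a) j :=
  ((sum fun i _ => ((hv j).lineDerivOp (e i)).lineDerivOp (e i)).sub
    (sum fun i _ => (hv i).schwartzMul ((hv j).lineDerivOp (e i)))).sub (hq.lineDerivOp (e j))

/-- The density `|v|²`, twice the kinetic energy density. -/
def energyDensity (v : ι → 𝓢(E, ℝ)) : 𝓢(E, ℝ) :=
  ∑ j, schwartzMul (v j) (v j)

/-- The density `|∇v|²` of the energy dissipation. -/
def dissipationDensity (e : ι → E) (v : ι → 𝓢(E, ℝ)) : 𝓢(E, ℝ) :=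
  ∑ i, ∑ j, schwartzMul (∂_{e i} (v j)) (∂_{e i} (v j))

lemma energyDensity_apply (v : ι → 𝓢(E, ℝ)) (x : E) :
    energyDensity v x = ∑ j, v j x ^ 2 := by
  simp only [energyDensity, sum_apply, schwartzMul_self_apply]

lemma dissipationDensity_apply (e : ι → E) (v : ι → 𝓢(E, ℝ)) (x : E) :
    dissipationDensity e v x = ∑ i, ∑ j, ∂_{e i} (v j) x ^ 2 := by
  simp only [dissipationDensity, sum_apply, schwartzMul_self_apply]

lemma advection_schwartzMul_self (e : ι → E) (v : ι → 𝓢(E, ℝ)) (f : 𝓢(E, ℝ)) :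
    advection e v (schwartzMul f f) = (2 : ℝ) • schwartzMul f (advection e v f) := by
  ext x
  simp only [advection, lineDerivOp_schwartzMul_self, sum_apply, smul_apply,
    schwartzMul_apply, smul_eq_mul, Finset.mul_sum]
  exact Finset.sum_congr rfl fun i _ => by ring

variable [MeasurableSpace E] [BorelSpace E] [FiniteDimensional ℝ E]
  {μ : Measure E} [μ.IsAddHaarMeasure] {e : ι → E} {v : ι → 𝓢(E, ℝ)}

lemma integral_schwartzMul_lineDerivOp (f g : 𝓢(E, ℝ)) (w : E) :
    ∫ x, schwartzMul f (∂_{w} g) x ∂μ = -∫ x, schwartzMul (∂_{w} f) g x ∂μ :=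
  SchwartzMap.integral_mul_lineDerivOp_right_eq_neg_left f g w

lemma integral_advection (e : ι → E) (v : ι → 𝓢(E, ℝ)) (f : 𝓢(E, ℝ)) :
    ∫ x, advection e v f x ∂μ = -∫ x, schwartzMul (divergence e v) f x ∂μ := by
  have hparts i := integral_schwartzMul_lineDerivOp (μ := μ) (v i) f (e i)
  simp only [← SchwartzMap.integralCLM_apply (𝕜 := ℝ)] at hparts ⊢
  simp only [advection, divergence, map_sum, hparts, Finset.sum_neg_distrib, sum_apply]

lemma integral_advection_eq_zero (hv : divergence e v = 0) (f : 𝓢(E, ℝ)) :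
    ∫ x, advection e v f x ∂μ = 0 := by
  simp [integral_advection, hv]

-- Since `f (v · ∇) f = (v · ∇) (f² / 2)`, the transport term is the advection of a function.
lemma integral_schwartzMul_advection_eq_zero (hv : divergence e v = 0) (f : 𝓢(E, ℝ)) :
    ∫ x, schwartzMul f (advection e v f) x ∂μ = 0 := by
  have h := integral_advection_eq_zero (μ := μ) hv (schwartzMul f f)
  simpa [advection_schwartzMul_self, integral_const_mul] using h

lemma integral_sum_schwartzMul_acceleration (hv : divergence e v = 0) (q : 𝓢(E, ℝ)) :
    ∫ x, (∑ j, schwartzMul (v j) (acceleration e v q j)) x ∂μ =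
      -∫ x, dissipationDensity e v x ∂μ := by
  have hdiffusion i j := integral_schwartzMul_lineDerivOp (μ := μ) (v j) (∂_{e i} (v j)) (e i)
  have htransport j := integral_schwartzMul_advection_eq_zero (μ := μ) hv (v j)
  have hpressure := integral_advection_eq_zero (μ := μ) hv q
  simp only [← SchwartzMap.integralCLM_apply (𝕜 := ℝ)] at hdiffusion htransport hpressure ⊢
  simp only [advection, map_sum] at hpressure
  simp only [acceleration, dissipationDensity, map_sum, map_sub, hdiffusion, htransport,
    Finset.sum_sub_distrib, hpressure, Finset.sum_neg_distrib,
    Finset.sum_const_zero, sub_zero]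
  rw [Finset.sum_comm]

end EnergyBalance

section EnergyIdentity

open scoped LineDeriv Topology

variable {ι E : Type*} [Fintype ι] [NormedAddCommGroup E] [NormedSpace ℝ E]

/-- A Schwartz solution of the Navier–Stokes equations `∂ₜu = Δu - (u · ∇) u - ∇p`, `div u = 0`
on `[0,T) × E`, with coordinate directions `e i`, under the weak time regularity that the energy
method needs: at every point of space `u` is continuous on `[0,T)` and satisfies the equations on
`(0,T)`, while `u` and `p` are locally bounded in Schwartz space. -/
structure IsSchwartzSolution (e : ι → E) (T : ℝ) (u : ℝ → ι → 𝓢(E, ℝ)) (p : ℝ → 𝓢(E, ℝ)) :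
    Prop where
  continuousOn : ∀ j x, ContinuousOn (fun s => u s j x) (Set.Ico 0 T)
  bounded_velocity : ∀ t ∈ Set.Ico 0 T, ∀ j, SchwartzBoundedAlong (𝓝[Set.Ico 0 T] t) fun s => u s j
  bounded_pressure : ∀ t ∈ Set.Ioo 0 T, SchwartzBoundedAlong (𝓝 t) p
  divergence_eq_zero : ∀ t ∈ Set.Ioo 0 T, divergence e (u t) = 0
  hasDerivAt : ∀ t ∈ Set.Ioo 0 T, ∀ j x,
    HasDerivAt (fun s => u s j x) (acceleration e (u t) (p t) j x) t

variable {e : ι → E} {T : ℝ} {u : ℝ → ι → 𝓢(E, ℝ)} {p : ℝ → 𝓢(E, ℝ)}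

lemma IsSchwartzSolution.hasDerivAt_energyDensity (hsol : IsSchwartzSolution e T u p) {t : ℝ}
    (ht : t ∈ Set.Ioo 0 T) (x : E) :
    HasDerivAt (fun s => energyDensity (u s) x)
      (((2 : ℝ) • ∑ j, schwartzMul (u t j) (acceleration e (u t) (p t) j)) x) t := by
  simp only [energyDensity_apply, smul_apply, sum_apply, schwartzMul_apply, smul_eq_mul,
    Finset.mul_sum, ← mul_assoc]
  exact .fun_sum fun j _ => by simpa using (hsol.hasDerivAt t ht j x).fun_pow 2

variable [MeasurableSpace E] [BorelSpace E] [FiniteDimensional ℝ E]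
  {μ : Measure E} [μ.IsAddHaarMeasure]

namespace IsSchwartzSolution

lemma continuousOn_energy (hsol : IsSchwartzSolution e T u p) :
    ContinuousOn (fun s => ∫ x, energyDensity (u s) x ∂μ) (Set.Ico 0 T) := fun t ht => by
  have hbdd : SchwartzBoundedAlong (𝓝[Set.Ico 0 T] t) fun s => energyDensity (u s) :=
    .sum fun j _ => (hsol.bounded_velocity t ht j).schwartzMul (hsol.bounded_velocity t ht j)
  refine hbdd.tendsto_integral fun x => ?_
  simp only [energyDensity_apply]
  exact tendsto_finsetSum _ fun j _ => (hsol.continuousOn j x t ht).pow 2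

lemma hasDerivAt_energy (hsol : IsSchwartzSolution e T u p) {t : ℝ} (ht : t ∈ Set.Ioo 0 T) :
    HasDerivAt (fun s => ∫ x, energyDensity (u s) x ∂μ)
      (-(2 * ∫ x, dissipationDensity e (u t) x ∂μ)) t := by
  have hu j : SchwartzBoundedAlong (𝓝 t) fun s => u s j := by
    simpa only [nhdsWithin_eq_nhds.2 (Ico_mem_nhds ht.1 ht.2)]
      using hsol.bounded_velocity t (Set.Ioo_subset_Ico_self ht) j
  have hpower : SchwartzBoundedAlong (𝓝 t) fun s =>
      ∑ j, schwartzMul (u s j) (acceleration e (u s) (p s) j) :=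
    .sum fun j _ => (hu j).schwartzMul (.acceleration hu (hsol.bounded_pressure t ht) j)
  refine ((hpower.const_smul 2).hasDerivAt_integral ?_).congr_deriv ?_
  · filter_upwards [Ioo_mem_nhds ht.1 ht.2] with s hs using hsol.hasDerivAt_energyDensity hs
  · simp only [smul_apply, smul_eq_mul, integral_const_mul, mul_neg,
      integral_sum_schwartzMul_acceleration (hsol.divergence_eq_zero t ht)]

end IsSchwartzSolution

theorem navier_stokes_energy_identity_general (hsol : IsSchwartzSolution e T u p) {t : ℝ}
    (ht : t ∈ Set.Ico 0 T) :
    (∫ x, ∑ j, u t j x ^ 2 ∂μ) + 2 * ∫ τ in (0 : ℝ)..t, ∫ x, ∑ i, ∑ j, ∂_{e i} (u τ j) x ^ 2 ∂μ =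
      ∫ x, ∑ j, u 0 j x ^ 2 ∂μ := by
  simp only [← dissipationDensity_apply]
  simp only [← energyDensity_apply]
  have hcont : ContinuousOn (fun s => -∫ x, energyDensity (u s) x ∂μ) (Set.Icc 0 t) :=
    (hsol.continuousOn_energy.mono (Set.Icc_subset_Ico_right ht.2)).neg
  have hderiv : ∀ s ∈ Set.Ioo 0 t, HasDerivAt (fun s => -∫ x, energyDensity (u s) x ∂μ)
      (2 * ∫ x, dissipationDensity e (u s) x ∂μ) s := fun s hs => by
    simpa only [neg_neg] using (hsol.hasDerivAt_energy ⟨hs.1, hs.2.trans ht.2⟩).fun_neg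
  have hnonneg : ∀ s ∈ Set.Ioo 0 t, 0 ≤ 2 * ∫ x, dissipationDensity e (u s) x ∂μ := fun s _ => by
    simp only [dissipationDensity_apply]
    positivity
  -- The energy is nonincreasing, so its derivative is integrable without further regularity.
  have hint := (intervalIntegrable_iff_integrableOn_Ioc_of_le ht.1).2
    (intervalIntegral.integrableOn_deriv_of_nonneg hcont hderiv hnonneg)
  have hftc := intervalIntegral.integral_eq_sub_of_hasDerivAt_of_le ht.1 hcont hderiv hint
  rw [intervalIntegral.integral_const_mul] at hftc
  linarith

end EnergyIdentity

namespace IsStrongSolution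

variable {T : ℝ} {u : ℝ → Fin 3 → 𝓢(E3, ℝ)} {p : ℝ → 𝓢(E3, ℝ)}

lemma differentiableAt_apply (hsol : IsStrongSolution T u p) (j : Fin 3) (x : E3) {t : ℝ}
    (ht : t ∈ Set.Ioo 0 T) : DifferentiableAt ℝ (fun s => u s j x) t :=
  DifferentiableAt.comp t (g := fun tx : ℝ × E3 => u tx.1 j tx.2) (f := fun s : ℝ => (s, x))
    (((hsol.smooth_u j).differentiableOn (by simp)).differentiableAt
      (prod_mem_nhds (Ico_mem_nhds ht.1 ht.2) univ_mem)) (by fun_prop)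

lemma hasDerivAt_apply (hsol : IsStrongSolution T u p) {t : ℝ} (ht : t ∈ Set.Ioo 0 T) (j : Fin 3)
    (x : E3) :
    HasDerivAt (fun s => u s j x)
      (acceleration (fun i => EuclideanSpace.single i 1) (u t) (p t) j x) t := by
  refine (hsol.differentiableAt_apply j x ht).hasDerivAt.congr_deriv ?_
  have haccel : acceleration (fun i => EuclideanSpace.single i 1) (u t) (p t) j x =
      ∑ i, pd i (pd i (u t j)) x - ∑ i, u t i x * pd i (u t j) x - pd j (p t) x := by
    simp only [acceleration, advection, sub_apply, sum_apply, schwartzMul_apply]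
    rfl
  linarith [hsol.eqn t ht x j]

lemma isSchwartzSolution (hsol : IsStrongSolution T u p) :
    IsSchwartzSolution (fun i => EuclideanSpace.single i 1) T u p where
  continuousOn j x := (hsol.smooth_u j).continuousOn.comp (f := fun s : ℝ => (s, x))
    (by fun_prop) fun _ hs => ⟨hs, trivial⟩
  bounded_velocity t ht j := .of_dist_lt fun k n =>
    let ⟨ε, hε, M, hM⟩ := hsol.locBdd_u k n t ht
    ⟨ε, hε, M, fun s hs hst => hM s hs hst j⟩
  bounded_pressure t ht := by
    simpa only [nhdsWithin_eq_nhds.2 (Ico_mem_nhds ht.1 ht.2)] using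
      SchwartzBoundedAlong.of_dist_lt fun k n =>
        hsol.locBdd_p k n t (Set.Ioo_subset_Ico_self ht)
  divergence_eq_zero t ht := by
    ext x
    simpa [divergence] using! hsol.divFree t (Set.Ioo_subset_Ico_self ht) x
  hasDerivAt _ ht := hsol.hasDerivAt_apply ht

end IsStrongSolution

/-- **Energy identity (3.15)**: a strong solution `(u, p)` of the Navier–Stokes
equations on `[0,T) × ℝ³` satisfies
`‖u(t)‖_{L²}² + 2 ∫₀ᵗ ‖∇u(τ)‖_{L²}² dτ = ‖u(0)‖_{L²}²` for every `t ∈ [0,T)`. -/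
theorem navier_stokes_energy_identity
    (T : ℝ) (hT : 0 < T) (u : ℝ → Fin 3 → 𝓢(E3, ℝ)) (p : ℝ → 𝓢(E3, ℝ))
    (hsol : IsStrongSolution T u p) (t : ℝ) (ht : t ∈ Set.Ico (0 : ℝ) T) :
    (∫ x, ∑ j : Fin 3, u t j x ^ 2)
        + 2 * ∫ τ in (0 : ℝ)..t, ∫ x, ∑ i : Fin 3, ∑ j : Fin 3, pd i (⇑(u τ j)) x ^ 2
      = ∫ x, ∑ j : Fin 3, u 0 j x ^ 2 :=
  navier_stokes_energy_identity_general hsol.isSchwartzSolution ht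
end
end
end
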